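/- arXiv:2308.05066 — 4 statements merged into one kernel-verified Lean document; each statement's English description precedes it below -/
import Mathlib

section
/- Descent Theorem. Let k be a field of characteristic 0, G an abelian group, and B an affine k-domain graded over k by G. Let H ∈ 𝕋(B). Then: (a) for every A ∈ KHLND(B) (each such A is a graded subring A = ⊕_{i∈G}(A ∩ B_i) of B), the subring A^{(H)} = ⊕_{i∈H}(A ∩ B_i) belongs to KHLND(B^{(H)}); (b) the map KHLND(B) → KHLND(B^{(H)}) sending A to A^{(H)} is injective; (c) if HLND(B) ≠ {0} then HLND(B^{(H)}) ≠ {0}; (d) if G is torsion-free and B is non-rigid, then B^{(H)} is non-rigid. -/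
noncomputable section

/-- A derivation is locally nilpotent. -/
def IsLND {R : Type*} [CommRing R] (D : Derivation ℤ R R) : Prop :=
  ∀ b : R, ∃ n : ℕ, 0 < n ∧ (⇑D)^[n] b = 0

/-- Kernel of a derivation, as a subring. -/
def kerDer {R : Type*} [CommRing R] (D : Derivation ℤ R R) : Subring R where
  carrier := {x | D x = 0}
  one_mem' := by simp
  mul_mem' := by
    intro a b ha hb
    simp only [Set.mem_setOf_eq] at *
    rw [Derivation.leibniz, ha, hb]
    simp
  add_mem' := by
    intro a b ha hb
    simp only [Set.mem_setOf_eq] at *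
    rw [map_add, ha, hb, add_zero]
  zero_mem' := by simp
  neg_mem' := by
    intro a ha
    simp only [Set.mem_setOf_eq] at *
    rw [map_neg, ha, neg_zero]

section Graded

variable {G : Type*} [AddCommGroup G] {B : Type*} [CommRing B]

/-- The Veronese subring `B^{(H)} = ⊕_{i ∈ H} B_i` of a `G`-graded ring,
realized as the subring generated by the homogeneous elements whose degree lies in `H`. -/
def verSub (𝒜 : G → AddSubgroup B) (H : AddSubgroup G) : Subring B :=
  Subring.closure (⋃ i ∈ (H : Set G), (𝒜 i : Set B))

/-- 𝔾(B): the subgroup of G generated by the degrees of nonzero homogeneous elements. -/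
def Gsub (𝒜 : G → AddSubgroup B) : AddSubgroup G :=
  AddSubgroup.closure { i : G | 𝒜 i ≠ ⊥ }

/-- `H ∈ 𝕋(B)`: the quotient `𝔾(B)/(H ∩ 𝔾(B))` is torsion. -/
def Tmem (𝒜 : G → AddSubgroup B) (H : AddSubgroup G) : Prop :=
  ∀ g ∈ Gsub 𝒜, ∃ n : ℕ, 0 < n ∧ n • g ∈ H

/-- A homogeneous derivation of `B`. -/
def IsHomogDer (𝒜 : G → AddSubgroup B) (D : Derivation ℤ B B) : Prop :=
  ∃ d : G, ∀ (i : G) (x : B), x ∈ 𝒜 i → D x ∈ 𝒜 (i + d)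

/-- A homogeneous derivation of a graded subring `S` of `B`. -/
def IsHomogDerOn (𝒜 : G → AddSubgroup B) (S : Subring B) (D : Derivation ℤ S S) : Prop :=
  ∃ d : G, ∀ (i : G) (x : S), (x : B) ∈ 𝒜 i → ((D x : S) : B) ∈ 𝒜 (i + d)

/-- 𝕄̄(B,p): the subgroup of G generated by the degrees i with B_i ⊄ p. -/
def Mbar (𝒜 : G → AddSubgroup B) (p : Ideal B) : AddSubgroup G :=
  AddSubgroup.closure { i : G | ¬ (𝒜 i : Set B) ⊆ (p : Set B) }

/-- A prime ideal of height 1. -/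
def heightOne {R : Type*} [CommRing R] (p : Ideal R) : Prop :=
  p.IsPrime ∧ (∃ q : Ideal R, q.IsPrime ∧ q < p) ∧
    ∀ q r : Ideal R, q.IsPrime → r.IsPrime → q < r → r < p → False

open Classical in
/-- 𝔾̄(B). -/
def Gbar (𝒜 : G → AddSubgroup B) : AddSubgroup G :=
  if ∃ p : Ideal B, heightOne p then ⨅ p : {p : Ideal B // heightOne p}, Mbar 𝒜 p.1
  else Gsub 𝒜

end Graded

/-- `KHLND(B)`: the set of kernels of nonzero homogeneous locally nilpotent derivations. -/
def KHLND {G : Type*} [AddCommGroup G] {B : Type*} [CommRing B]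
    (𝒜 : G → AddSubgroup B) : Set (Subring B) :=
  { A | ∃ D : Derivation ℤ B B, IsLND D ∧ IsHomogDer 𝒜 D ∧ D ≠ 0 ∧ A = kerDer D }

/-- `KHLND(B^{(H)})` for a graded subring `S` of `B`. -/
def KHLNDOn {G : Type*} [AddCommGroup G] {B : Type*} [CommRing B]
    (𝒜 : G → AddSubgroup B) (S : Subring B) : Set (Subring S) :=
  { A | ∃ D : Derivation ℤ S S, IsLND D ∧ IsHomogDerOn 𝒜 S D ∧ D ≠ 0 ∧ A = kerDer D }

section LNDHelpers

theorem lnd_mul {B : Type*} [CommRing B] (D : Derivation ℤ B B) (x y : B) :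
    D (x * y) = x * D y + y * D x := by
  simp [Derivation.leibniz]

theorem lnd_iter_add {B : Type*} [CommRing B] (D : Derivation ℤ B B) (n : ℕ) (x y : B) :
    (⇑D)^[n] (x + y) = (⇑D)^[n] x + (⇑D)^[n] y := by
  induction n generalizing x y with
  | zero => rfl
  | succ n ih => simp only [Function.iterate_succ_apply, map_add, ih]

theorem lnd_iter_zero {B : Type*} [CommRing B] (D : Derivation ℤ B B) (n : ℕ) :
    (⇑D)^[n] 0 = 0 := by
  induction n with
  | zero => rfl
  | succ n ih => simp only [Function.iterate_succ_apply, map_zero, ih]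

theorem lnd_iter_neg {B : Type*} [CommRing B] (D : Derivation ℤ B B) (n : ℕ) (x : B) :
    (⇑D)^[n] (-x) = - (⇑D)^[n] x := by
  induction n generalizing x with
  | zero => rfl
  | succ n ih => simp only [Function.iterate_succ_apply, map_neg, ih]

theorem lnd_iter_const {B : Type*} [CommRing B] (D : Derivation ℤ B B) (n : ℕ) (c x : B)
    (hc : D c = 0) : (⇑D)^[n] (c * x) = c * (⇑D)^[n] x := by
  induction n generalizing x with
  | zero => rfl
  | succ n ih => simp only [Function.iterate_succ_apply, lnd_mul, hc, mul_zero, add_zero, ih]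

theorem lnd_iter_le {B : Type*} [CommRing B] (D : Derivation ℤ B B) {n m : ℕ} (h : n ≤ m) {x : B}
    (hx : (⇑D)^[n] x = 0) : (⇑D)^[m] x = 0 := by
  obtain ⟨t, rfl⟩ := Nat.exists_eq_add_of_le' h
  rw [Function.iterate_add_apply, hx, lnd_iter_zero]

theorem lnd_top_mul {B : Type*} [CommRing B] (D : Derivation ℤ B B) (n : ℕ) :
    ∀ (p q : ℕ) (x y : B), p + q = n → (⇑D)^[p+1] x = 0 → (⇑D)^[q+1] y = 0 →
      (⇑D)^[n] (x * y) = (n.choose p : B) * ((⇑D)^[p] x * (⇑D)^[q] y) := by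
  induction n with
  | zero =>
    intro p q x y h _ _
    obtain ⟨rfl, rfl⟩ : p = 0 ∧ q = 0 := by omega
    simp
  | succ n ih =>
    intro p q x y h hx hy
    rcases p with _ | p
    · have hx' : D x = 0 := by simpa using hx
      obtain rfl : q = n + 1 := by omega
      rw [lnd_iter_const D _ _ _ hx']
      simp
    rcases q with _ | q
    · have hy' : D y = 0 := by simpa using hy
      obtain rfl : p = n := by omega
      rw [mul_comm, lnd_iter_const D _ _ _ hy']
      simp [mul_comm]
    rw [Function.iterate_succ_apply, lnd_mul, lnd_iter_add,
      ih (p+1) q x (D y) (by omega) hx (by simpa only [Function.iterate_succ_apply] using hy),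
      mul_comm y, ih p (q+1) (D x) y (by omega)
        (by simpa only [Function.iterate_succ_apply] using hx) hy, Nat.choose_succ_succ]
    simp only [Function.iterate_succ_apply]
    push_cast
    ring

theorem lnd_exact {B : Type*} [CommRing B] (D : Derivation ℤ B B) (hD : IsLND D) (x : B)
    (hx : x ≠ 0) : ∃ p : ℕ, (⇑D)^[p] x ≠ 0 ∧ (⇑D)^[p+1] x = 0 := by
  classical
  have h : ∃ n, (⇑D)^[n] x = 0 := by
    obtain ⟨n, _, hn⟩ := hD x
    exact ⟨n, hn⟩
  have h0 : Nat.find h ≠ 0 := by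
    intro h0
    have := Nat.find_spec h
    rw [h0] at this
    exact hx this
  refine ⟨Nat.find h - 1, Nat.find_min h (by omega), ?_⟩
  rw [Nat.sub_add_cancel (by omega)]
  exact Nat.find_spec h

theorem lnd_of_mul {B : Type*} [CommRing B] [IsDomain B] [CharZero B]
    (D : Derivation ℤ B B) (hD : IsLND D) {n : ℕ} {x y : B}
    (hx : x ≠ 0) (hy : y ≠ 0) (h : (⇑D)^[n] (x * y) = 0) : (⇑D)^[n] x = 0 := by
  obtain ⟨p, hp, hp'⟩ := lnd_exact D hD x hx
  obtain ⟨q, hq, hq'⟩ := lnd_exact D hD y hy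
  have key := lnd_top_mul D (p + q) p q x y rfl hp' hq'
  have hne : (⇑D)^[p+q] (x * y) ≠ 0 := by
    rw [key]
    refine mul_ne_zero ?_ (mul_ne_zero hp hq)
    exact_mod_cast (Nat.choose_pos (by omega)).ne'
  have : p + q < n := by
    by_contra hc
    exact hne (lnd_iter_le D (by omega) h)
  exact lnd_iter_le D (by omega) hp'

theorem lnd_unit {k : Type*} [Field k] {B : Type*} [CommRing B] [IsDomain B] [CharZero B]
    [Algebra k B] (D : Derivation ℤ B B) (hD : IsLND D) (c : k) : D (algebraMap k B c) = 0 := by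
  by_cases hc : c = 0
  · simp [hc]
  have h1 : algebraMap k B c * algebraMap k B c⁻¹ = 1 := by
    rw [← map_mul, mul_inv_cancel₀ hc, map_one]
  have := lnd_of_mul D hD (n := 1) (x := algebraMap k B c) (y := algebraMap k B c⁻¹)
    (left_ne_zero_of_mul_eq_one h1) (right_ne_zero_of_mul_eq_one h1) (by simp [h1])
  simpa using this

theorem lnd_pow_const {B : Type*} [CommRing B] (D : Derivation ℤ B B) {a : B} (ha : D a = 0)
    (n : ℕ) : D (a ^ n) = 0 := by
  simp [Derivation.leibniz_pow, ha]

theorem lnd_pow_zero {B : Type*} [CommRing B] [IsDomain B] [CharZero B] (D : Derivation ℤ B B)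
    {x : B} {n : ℕ} (hn : 0 < n) (h : D (x ^ n) = 0) : D x = 0 := by
  by_cases hx : x = 0
  · simp [hx]
  rw [Derivation.leibniz_pow] at h
  simp only [smul_eq_mul, nsmul_eq_mul, mul_eq_zero, Nat.cast_eq_zero, pow_eq_zero_iff'] at h
  rcases h with h | h | h
  · omega
  · exact absurd h.1 hx
  · exact h

theorem lnd_iter_slice {B : Type*} [CommRing B] (D : Derivation ℤ B B) {s : B}
    (hs : D (D s) = 0) (N : ℕ) : (⇑D)^[N] (s ^ N) = (N.factorial : B) * D s ^ N := by
  suffices h : ∀ N, (⇑D)^[N] (s ^ N) = (N.factorial : B) * D s ^ N by exact h N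
  intro N
  induction N with
  | zero => simp
  | succ N ih =>
    have : D (s ^ (N+1)) = ((N + 1 : ℕ) * D s) * s ^ N := by
      simp [Derivation.leibniz_pow]; ring
    rw [Function.iterate_succ_apply, this, lnd_iter_const, ih, Nat.factorial_succ]
    · push_cast; ring
    · rw [lnd_mul, hs]; simp

end LNDHelpers

set_option linter.unusedSectionVars false

section GrHelpers

variable {G : Type*} [AddCommGroup G] [DecidableEq G]
  {B : Type*} [CommRing B] (𝒜 : G → AddSubgroup B) [GradedRing 𝒜]

theorem gr_ind {P : B → Prop} (h0 : P 0) (ha : ∀ x y, P x → P y → P (x + y))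
    (hh : ∀ i, ∀ x ∈ 𝒜 i, P x) (x : B) : P x :=
  DirectSum.Decomposition.inductionOn 𝒜 h0 (fun m => hh _ m m.2) (fun x y => ha x y) x

theorem gr_proj_mem (i : G) (x : B) : GradedRing.proj 𝒜 i x ∈ 𝒜 i := by
  rw [GradedRing.proj_apply]; exact SetLike.coe_mem _

theorem gr_proj_same {i : G} {x : B} (h : x ∈ 𝒜 i) : GradedRing.proj 𝒜 i x = x := by
  rw [GradedRing.proj_apply]; exact DirectSum.decompose_of_mem_same 𝒜 h

theorem gr_proj_ne {i j : G} {x : B} (h : x ∈ 𝒜 i) (hij : i ≠ j) : GradedRing.proj 𝒜 j x = 0 := by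
  rw [GradedRing.proj_apply]; exact DirectSum.decompose_of_mem_ne 𝒜 h hij

theorem gr_sum (x : B) : ∃ T : Finset G, (∀ i, i ∉ T → GradedRing.proj 𝒜 i x = 0) ∧
    x = ∑ i ∈ T, GradedRing.proj 𝒜 i x := by
  classical
  refine ⟨(DirectSum.decompose 𝒜 x).support, ?_, ?_⟩
  · intro i hi
    rw [GradedRing.proj_apply]
    simpa using hi
  · conv_lhs => rw [← DirectSum.sum_support_decompose 𝒜 x]
    rfl

theorem gr_mem_of {q : G} {x : B} (h : ∀ i, i ≠ q → GradedRing.proj 𝒜 i x = 0) : x ∈ 𝒜 q := by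
  obtain ⟨T, _, hx⟩ := gr_sum 𝒜 x
  rw [hx]
  refine AddSubgroup.sum_mem _ fun i _ => ?_
  by_cases hi : i = q
  · subst hi; exact gr_proj_mem 𝒜 i x
  · rw [h i hi]; exact zero_mem _

theorem gr_proj_mul {p : G} {s : B} (hs : s ∈ 𝒜 p) (i : G) (x : B) :
    GradedRing.proj 𝒜 (p + i) (s * x) = s * GradedRing.proj 𝒜 i x := by
  rw [GradedRing.proj_apply, GradedRing.proj_apply]
  exact DirectSum.coe_decompose_mul_add_of_left_mem 𝒜 hs

theorem gr_mul {i j : G} {x y : B} (hx : x ∈ 𝒜 i) (hy : y ∈ 𝒜 j) : x * y ∈ 𝒜 (i + j) :=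
  SetLike.mul_mem_graded hx hy

theorem gr_pow {i : G} {x : B} (hx : x ∈ 𝒜 i) (n : ℕ) : x ^ n ∈ 𝒜 (n • i) :=
  SetLike.pow_mem_graded n hx

theorem gr_div [IsDomain B] {p q : G} {s x : B} (hs : s ∈ 𝒜 p) (hs0 : s ≠ 0)
    (h : s * x ∈ 𝒜 (p + q)) : x ∈ 𝒜 q := by
  refine gr_mem_of 𝒜 fun i hi => ?_
  have := gr_proj_mul 𝒜 hs i x
  rw [gr_proj_ne 𝒜 h (by simpa using hi.symm)] at this
  exact (mul_eq_zero.mp this.symm).resolve_left hs0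

theorem gr_tors {H : AddSubgroup G} (hH : Tmem 𝒜 H) {i : G} {x : B} (hx : x ∈ 𝒜 i) (h0 : x ≠ 0) :
    ∃ w : ℕ, 0 < w ∧ w • i ∈ H := by
  refine hH i (AddSubgroup.subset_closure ?_)
  intro hb
  rw [hb] at hx
  exact h0 (by simpa using hx)

theorem ver_mem {H : AddSubgroup G} {i : G} (hi : i ∈ H) {x : B} (hx : x ∈ 𝒜 i) :
    x ∈ verSub 𝒜 H :=
  Subring.subset_closure (Set.mem_biUnion (show i ∈ (H : Set G) from hi) hx)

theorem ver_ind {H : AddSubgroup G} {P : B → Prop} (h0 : P 0) (ha : ∀ x y, P x → P y → P (x + y))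
    (hh : ∀ i ∈ H, ∀ x ∈ 𝒜 i, P x) (x : B) (hx : x ∈ verSub 𝒜 H) : P x := by
  have hmon : ∀ y ∈ Submonoid.closure (⋃ i ∈ (H : Set G), (𝒜 i : Set B)),
      ∃ i ∈ H, y ∈ 𝒜 i := by
    intro y hy
    induction hy using Submonoid.closure_induction with
    | mem y hy =>
      simp only [Set.mem_iUnion] at hy
      obtain ⟨i, hi, hy⟩ := hy
      exact ⟨i, hi, hy⟩
    | one => exact ⟨0, H.zero_mem, SetLike.one_mem_graded 𝒜⟩
    | mul y z _ _ hy hz =>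
      obtain ⟨i, hi, hy⟩ := hy
      obtain ⟨j, hj, hz⟩ := hz
      exact ⟨i + j, H.add_mem hi hj, gr_mul 𝒜 hy hz⟩
  rw [verSub, Subring.mem_closure_iff] at hx
  have : ∀ z ∈ AddSubgroup.closure
      ((Submonoid.closure (⋃ i ∈ (H : Set G), (𝒜 i : Set B)) : Submonoid B) : Set B),
      P z ∧ P (-z) := by
    intro z hz
    induction hz using AddSubgroup.closure_induction with
    | mem z hz =>
      obtain ⟨i, hi, hz⟩ := hmon z hz
      exact ⟨hh i hi z hz, hh i hi _ (neg_mem hz)⟩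
    | zero => simpa using h0
    | add x y _ _ hx hy => exact ⟨ha _ _ hx.1 hy.1, by rw [neg_add]; exact ha _ _ hx.2 hy.2⟩
    | neg x _ hx => exact ⟨hx.2, by rw [neg_neg]; exact hx.1⟩
  exact (this x hx).1

theorem hom_proj (D : Derivation ℤ B B) (d : G) (hd : ∀ i x, x ∈ 𝒜 i → D x ∈ 𝒜 (i + d))
    (i : G) (x : B) : GradedRing.proj 𝒜 (i + d) (D x) = D (GradedRing.proj 𝒜 i x) := by
  induction x using gr_ind 𝒜 with
  | h0 => simp
  | ha x y hx hy => rw [map_add, map_add, map_add, map_add, hx, hy]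
  | hh j x hx =>
    by_cases hij : j = i
    · subst hij
      rw [gr_proj_same 𝒜 hx, gr_proj_same 𝒜 (hd _ _ hx)]
    · rw [gr_proj_ne 𝒜 hx hij, gr_proj_ne 𝒜 (hd _ _ hx) (by simpa using hij), map_zero]

theorem ver_const {H : AddSubgroup G} (hH : Tmem 𝒜 H) [IsDomain B] [CharZero B]
    (D : Derivation ℤ B B) {i : G} {x : B} (hx : x ∈ 𝒜 i)
    (h : ∀ n, x ^ n ∈ verSub 𝒜 H → D (x ^ n) = 0) : D x = 0 := by
  by_cases h0 : x = 0
  · simp [h0]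
  obtain ⟨w, hw, hwi⟩ := gr_tors 𝒜 hH hx h0
  exact lnd_pow_zero D hw (h w (ver_mem 𝒜 hwi (gr_pow 𝒜 hx w)))

theorem desc_b {H : AddSubgroup G} (hH : Tmem 𝒜 H) [IsDomain B] [CharZero B]
    (D₁ D₂ : Derivation ℤ B B) (hd : IsHomogDer 𝒜 D₁)
    (h : ∀ x ∈ verSub 𝒜 H, D₁ x = 0 → D₂ x = 0) (x : B) (hx : D₁ x = 0) : D₂ x = 0 := by
  obtain ⟨d, hd⟩ := hd
  obtain ⟨T, _, hT⟩ := gr_sum 𝒜 x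
  rw [hT, map_sum]
  refine Finset.sum_eq_zero fun i _ => ?_
  refine ver_const 𝒜 hH D₂ (gr_proj_mem 𝒜 i x) fun n hn => h _ hn (lnd_pow_const _ ?_ _)
  rw [← hom_proj 𝒜 D₁ d hd, hx, map_zero]

theorem hom_slice (D : Derivation ℤ B B) (hD : IsLND D) (d : G)
    (hd : ∀ i x, x ∈ 𝒜 i → D x ∈ 𝒜 (i + d)) (hne : D ≠ 0) :
    ∃ (e : G) (s : B), s ∈ 𝒜 e ∧ D s ≠ 0 ∧ D (D s) = 0 := by
  have h1 : ∃ i, ∃ x ∈ 𝒜 i, D x ≠ 0 := by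
    by_contra hc
    push Not at hc
    apply hne
    ext x
    induction x using gr_ind 𝒜 with
    | h0 => simp
    | ha x y hx hy => simp [hx, hy]
    | hh j x hx => simp [hc j x hx]
  obtain ⟨i, x, hx, hDx⟩ := h1
  obtain ⟨p, hp, hp'⟩ := lnd_exact D hD _ hDx
  have hmem : ∀ n : ℕ, ∃ e, (⇑D)^[n] x ∈ 𝒜 e := by
    intro n
    induction n with
    | zero => exact ⟨i, hx⟩
    | succ n ih =>
      obtain ⟨e, he⟩ := ih
      exact ⟨e + d, by rw [Function.iterate_succ_apply']; exact hd _ _ he⟩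
  obtain ⟨e, he⟩ := hmem p
  refine ⟨e, _, he, ?_, ?_⟩
  · have h1 : D ((⇑D)^[p] x) = (⇑D)^[p] (D x) := by
      rw [← Function.iterate_succ_apply, Function.iterate_succ_apply']
    rwa [h1]
  · have h1 : D (D ((⇑D)^[p] x)) = (⇑D)^[p+1] (D x) := by
      rw [← Function.iterate_succ_apply, Function.iterate_succ_apply', Function.iterate_succ_apply']
    rwa [h1]

end GrHelpers

section PartA

variable {G : Type*} [AddCommGroup G] [DecidableEq G]
  {B : Type*} [CommRing B] (𝒜 : G → AddSubgroup B) [GradedRing 𝒜]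

/-- Degrees of homogeneous constants of `D`, modulo `H`. -/
def constDeg [IsDomain B] (H : AddSubgroup G) (hH : Tmem 𝒜 H) (D : Derivation ℤ B B) :
    AddSubgroup G where
  carrier := {g | ∃ i, ∃ β ∈ 𝒜 i, β ≠ 0 ∧ D β = 0 ∧ i - g ∈ H}
  zero_mem' := ⟨0, 1, SetLike.one_mem_graded 𝒜, one_ne_zero, by simp, by simp⟩
  add_mem' := by
    rintro g h ⟨i, β, hβ, hβ0, hDβ, hi⟩ ⟨j, γ, hγ, hγ0, hDγ, hj⟩
    refine ⟨i + j, β * γ, gr_mul 𝒜 hβ hγ, mul_ne_zero hβ0 hγ0, by simp [lnd_mul, hDβ, hDγ], ?_⟩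
    have := H.add_mem hi hj
    rwa [show i + j - (g + h) = i - g + (j - h) by abel]
  neg_mem' := by
    rintro g ⟨i, β, hβ, hβ0, hDβ, hi⟩
    obtain ⟨w, hw, hwi⟩ := gr_tors 𝒜 hH hβ hβ0
    obtain ⟨v, rfl⟩ : ∃ v, w = v + 1 := ⟨w - 1, by omega⟩
    refine ⟨v • i, β ^ v, gr_pow 𝒜 hβ v, pow_ne_zero _ hβ0, lnd_pow_const D hDβ v, ?_⟩
    have := H.sub_mem hwi hi
    rwa [show v • i - -g = (v + 1) • i - (i - g) by rw [add_smul, one_smul]; abel]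

theorem mem_constDeg [IsDomain B] {H : AddSubgroup G} {hH : Tmem 𝒜 H} {D : Derivation ℤ B B}
    {g : G} : g ∈ constDeg 𝒜 H hH D ↔ ∃ i, ∃ β ∈ 𝒜 i, β ≠ 0 ∧ D β = 0 ∧ i - g ∈ H := Iff.rfl

theorem iter_mem (D : Derivation ℤ B B) (d : G)
    (hd : ∀ i x, x ∈ 𝒜 i → D x ∈ 𝒜 (i + d)) {j : G} {b : B} (hb : b ∈ 𝒜 j) (N : ℕ) :
    (⇑D)^[N] b ∈ 𝒜 (j + N • d) := by
  induction N with
  | zero => simpa using hb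
  | succ N ih =>
    rw [Function.iterate_succ_apply', add_smul, one_smul, ← add_assoc]
    exact hd _ _ ih

theorem slice_dvd [IsDomain B] (hQ : ∀ n : ℕ, n ≠ 0 → IsUnit (n : B))
    (H : AddSubgroup G) (hH : Tmem 𝒜 H)
    (D : Derivation ℤ B B) (d : G) (hd : ∀ i x, x ∈ 𝒜 i → D x ∈ 𝒜 (i + d))
    {e : G} {s : B} (hs : s ∈ 𝒜 e) (ha0 : D s ≠ 0) (hDa : D (D s) = 0)
    (m : ℕ) (hm : ∀ N : ℕ, N • e ∈ constDeg 𝒜 H hH D → m ∣ N)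
    (N : ℕ) : ∀ (b : B) (j : G), j ∈ H → b ∈ 𝒜 j → (⇑D)^[N] b = 0 →
      ∃ n : ℕ, s ^ (m - 1) ∣ (D s) ^ n * D b := by
  induction N with
  | zero =>
    intro b j _ _ h
    have : b = 0 := h
    exact ⟨0, by simp [this]⟩
  | succ N ih =>
    intro b j hj hb h
    by_cases hc : (⇑D)^[N] b = 0
    · exact ih b j hj hb hc
    rcases Nat.eq_zero_or_pos N with hN | hN
    · subst hN
      have : D b = 0 := h
      exact ⟨0, by simp [this]⟩
    have hDc : D ((⇑D)^[N] b) = 0 := by rwa [← Function.iterate_succ_apply' (⇑D) N b]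
    have hcm := iter_mem 𝒜 D d hd hb N
    have ha := hd _ _ hs
    set a := D s with ha_def
    set c := (⇑D)^[N] b with hc_def
    obtain ⟨w, hw, hwi⟩ := gr_tors 𝒜 hH ha ha0
    obtain ⟨v, rfl⟩ : ∃ v, w = v + 1 := ⟨w - 1, by omega⟩
    have hβm : a ^ (v * N) * c ∈ 𝒜 ((v * N) • (e + d) + (j + N • d)) :=
      gr_mul 𝒜 (gr_pow 𝒜 ha _) hcm
    have hDβ : D (a ^ (v * N) * c) = 0 := by
      rw [lnd_mul, hDc, lnd_pow_const D hDa]; simp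
    have hU : N • e ∈ constDeg 𝒜 H hH D := by
      rw [← neg_mem_iff, mem_constDeg]
      refine ⟨_, _, hβm, mul_ne_zero (pow_ne_zero _ ha0) hc, hDβ, ?_⟩
      have h1 : N • ((v + 1) • (e + d)) + j ∈ H := H.add_mem (H.nsmul_mem hwi N) hj
      convert h1 using 1
      simp only [add_smul, smul_add, mul_smul, one_smul, smul_comm N v]
      abel
    have hmN := hm N hU
    set β := a ^ (v * N) * c with hβ_def
    let b' : B := (N.factorial : B) * a ^ ((v + 1) * N) * b - β * s ^ N
    have hb'm : b' ∈ 𝒜 (N • ((v + 1) • (e + d)) + j) := by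
      refine sub_mem ?_ ?_
      · have h1 : (N.factorial : B) ∈ 𝒜 0 := SetLike.natCast_mem_graded 𝒜 _
        have h2 := gr_mul 𝒜 (gr_mul 𝒜 h1 (gr_pow 𝒜 ha ((v + 1) * N))) hb
        convert h2 using 2
        simp only [add_smul, smul_add, mul_smul, one_smul, smul_comm N v, zero_add, add_mul, one_mul]
      · have h2 := gr_mul 𝒜 hβm (gr_pow 𝒜 hs N)
        convert h2 using 2
        simp only [add_smul, smul_add, mul_smul, one_smul, smul_comm N v]
        abel
    have hDfa : D ((N.factorial : B) * a ^ ((v + 1) * N)) = 0 := by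
      rw [lnd_mul, lnd_pow_const D hDa]; simp
    have hb'N : (⇑D)^[N] b' = 0 := by
      simp only [b', sub_eq_add_neg]
      rw [lnd_iter_add, lnd_iter_neg, lnd_iter_const D _ _ _ hDfa, lnd_iter_const D _ _ _ hDβ,
        lnd_iter_slice D hDa, ← hc_def, hβ_def, ← ha_def]
      ring
    obtain ⟨n, hn⟩ := ih b' _ (H.add_mem (H.nsmul_mem hwi N) hj) hb'm hb'N
    have hDb' : D b' = (N.factorial : B) * a ^ ((v + 1) * N) * D b
        - β * (N * s ^ (N - 1) * a) := by
      simp only [b', map_sub]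
      rw [lnd_mul, hDfa, lnd_mul, hDβ, Derivation.leibniz_pow, ← ha_def]
      simp only [smul_eq_mul, nsmul_eq_mul]
      ring
    refine ⟨n + (v + 1) * N, ?_⟩
    have hle : m - 1 ≤ N - 1 := Nat.sub_le_sub_right (Nat.le_of_dvd hN hmN) 1
    have h3 : s ^ (m - 1) ∣ a ^ n * (β * (N * s ^ (N - 1) * a)) := by
      refine dvd_mul_of_dvd_right (dvd_mul_of_dvd_right (dvd_mul_of_dvd_left
        (dvd_mul_of_dvd_right (pow_dvd_pow s hle) _) _) _) _
    have h4 := dvd_add hn h3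
    rw [hDb'] at h4
    have h5 : a ^ n * ((N.factorial : B) * a ^ ((v + 1) * N) * D b
        - β * (N * s ^ (N - 1) * a)) + a ^ n * (β * (N * s ^ (N - 1) * a))
        = (N.factorial : B) * (a ^ (n + (v + 1) * N) * D b) := by ring
    rw [h5] at h4
    exact ((hQ _ (Nat.factorial_ne_zero N)).dvd_mul_left).mp h4

/-- The Veronese subring as a `k`-subalgebra. -/
def verAlg {k : Type*} [Field k] [Algebra k B] (hoverk : ∀ c : k, algebraMap k B c ∈ 𝒜 0)
    (H : AddSubgroup G) : Subalgebra k B :=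
  { (verSub 𝒜 H) with
    algebraMap_mem' := fun c => ver_mem 𝒜 H.zero_mem (hoverk c) }

theorem mem_verAlg {k : Type*} [Field k] [Algebra k B]
    {hoverk : ∀ c : k, algebraMap k B c ∈ 𝒜 0} {H : AddSubgroup G} {x : B} :
    x ∈ verAlg 𝒜 hoverk H ↔ x ∈ verSub 𝒜 H := Iff.rfl

theorem verAlg_fg {k : Type*} [Field k] [Algebra k B] [Algebra.FiniteType k B]
    (hoverk : ∀ c : k, algebraMap k B c ∈ 𝒜 0) (H : AddSubgroup G) (hH : Tmem 𝒜 H) :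
    (verAlg 𝒜 hoverk H).FG := by
  have hint : Algebra.IsIntegral (verAlg 𝒜 hoverk H) B := by
    constructor
    intro x
    induction x using gr_ind 𝒜 with
    | h0 => exact isIntegral_zero
    | ha x y hx hy => exact hx.add hy
    | hh i x hx =>
      by_cases h0 : x = 0
      · rw [h0]; exact isIntegral_zero
      obtain ⟨w, hw, hwi⟩ := gr_tors 𝒜 hH hx h0
      refine IsIntegral.of_pow hw ?_
      have hmem : x ^ w ∈ verAlg 𝒜 hoverk H := ver_mem 𝒜 hwi (gr_pow 𝒜 hx w)
      exact isIntegral_algebraMap (x := (⟨x ^ w, hmem⟩ : verAlg 𝒜 hoverk H))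
  have hft : Algebra.FiniteType (verAlg 𝒜 hoverk H) B :=
    Algebra.FiniteType.of_restrictScalars_finiteType k _ B
  have hfin : Module.Finite (verAlg 𝒜 hoverk H) B := Algebra.IsIntegral.finite
  have := fg_of_fg_of_fg k (verAlg 𝒜 hoverk H) B Algebra.FiniteType.out hfin.fg_top
    Subtype.val_injective
  exact (Subalgebra.fg_top _).mp this

theorem desc_a {k : Type*} [Field k] [CharZero k] [IsDomain B] [CharZero B] [Algebra k B]
    [Algebra.FiniteType k B]
    (hoverk : ∀ c : k, algebraMap k B c ∈ 𝒜 0) (H : AddSubgroup G) (hH : Tmem 𝒜 H)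
    (D : Derivation ℤ B B) (hD : IsLND D) (hhom : IsHomogDer 𝒜 D) (hne : D ≠ 0) :
    ∃ E : Derivation ℤ (verSub 𝒜 H) (verSub 𝒜 H), IsLND E ∧ IsHomogDerOn 𝒜 (verSub 𝒜 H) E ∧
      E ≠ 0 ∧ ∀ b, E b = 0 ↔ D b = 0 := by
  have hQ : ∀ n : ℕ, n ≠ 0 → IsUnit (n : B) := by
    intro n hn
    rw [← map_natCast (algebraMap k B) n]
    exact (IsUnit.mk0 (n : k) (Nat.cast_ne_zero.mpr hn)).map _
  obtain ⟨d, hd⟩ := hhom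
  obtain ⟨e, s, hs, ha0, hDa⟩ := hom_slice 𝒜 D hD d hd hne
  have ha := hd _ _ hs
  have hs0 : s ≠ 0 := by rintro rfl; simp at ha0
  let m := addOrderOf (QuotientAddGroup.mk e : G ⧸ constDeg 𝒜 H hH D)
  have hmiff : ∀ N : ℕ, N • e ∈ constDeg 𝒜 H hH D ↔ m ∣ N := by
    intro N
    rw [addOrderOf_dvd_iff_nsmul_eq_zero, ← QuotientAddGroup.mk_nsmul,
      QuotientAddGroup.eq_zero_iff]
  have hm0 : 0 < m := by
    obtain ⟨w, hw, hwe⟩ := gr_tors 𝒜 hH hs hs0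
    refine Nat.pos_of_dvd_of_pos ((hmiff w).mp ?_) hw
    rw [mem_constDeg]
    exact ⟨0, 1, SetLike.one_mem_graded 𝒜, one_ne_zero, by simp, by simpa using hwe⟩
  clear_value m
  obtain ⟨i, α, hα, hα0, hDα, hi⟩ := (mem_constDeg 𝒜).mp ((hmiff m).mpr dvd_rfl)
  have hdvd := slice_dvd 𝒜 hQ H hH D d hd hs ha0 hDa m (fun N => (hmiff N).mp)
  -- pointwise bound
  have hpt : ∀ b ∈ verSub 𝒜 H, ∃ n : ℕ, s ^ (m - 1) ∣ (D s) ^ n * D b := by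
    intro b hb
    refine ver_ind 𝒜 (P := fun b => ∃ n : ℕ, s ^ (m - 1) ∣ (D s) ^ n * D b) ?_ ?_ ?_ b hb
    · exact ⟨0, by simp⟩
    · intro x y hx hy
      obtain ⟨n₁, h₁⟩ := hx
      obtain ⟨n₂, h₂⟩ := hy
      refine ⟨n₁ + n₂, ?_⟩
      have := dvd_add (dvd_mul_of_dvd_right h₁ (D s ^ n₂)) (dvd_mul_of_dvd_right h₂ (D s ^ n₁))
      convert this using 1
      rw [map_add]; ring
    · intro j hj x hx
      obtain ⟨N, _, hN⟩ := hD x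
      exact hdvd N x j hj hx hN
  -- uniform bound
  have hunif : ∃ N : ℕ, ∀ b ∈ verSub 𝒜 H, s ^ (m - 1) ∣ (D s) ^ N * D b := by
    obtain ⟨F, hF⟩ := verAlg_fg 𝒜 hoverk H hH
    have hFm : ∀ f ∈ F, f ∈ verSub 𝒜 H := by
      intro f hf
      rw [← mem_verAlg 𝒜 (hoverk := hoverk), ← hF]
      exact Algebra.subset_adjoin hf
    have : ∃ N : ℕ, ∀ f ∈ F, s ^ (m - 1) ∣ (D s) ^ N * D f := by
      choose! n hn using hpt
      refine ⟨∑ f ∈ F, n f, fun f hf => ?_⟩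
      refine (hn f (hFm f hf)).trans (mul_dvd_mul_right (pow_dvd_pow _ ?_) _)
      exact Finset.single_le_sum (f := n) (fun _ _ => Nat.zero_le _) hf
    obtain ⟨N, hN⟩ := this
    refine ⟨N, fun b hb => ?_⟩
    rw [← mem_verAlg 𝒜 (hoverk := hoverk), ← hF] at hb
    induction hb using Algebra.adjoin_induction with
    | mem x hx => exact hN x hx
    | algebraMap r => rw [lnd_unit D hD]; simp
    | add x y _ _ hx hy => rw [map_add, mul_add]; exact dvd_add hx hy
    | mul x y _ _ hx hy =>
      rw [lnd_mul, mul_add, mul_left_comm, mul_left_comm _ y]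
      exact dvd_add (dvd_mul_of_dvd_right hy _) (dvd_mul_of_dvd_right hx _)
  obtain ⟨N, hN⟩ := hunif
  obtain ⟨w, hw, hwi⟩ := gr_tors 𝒜 hH ha ha0
  obtain ⟨v, rfl⟩ : ∃ v, w = v + 1 := ⟨w - 1, by omega⟩
  obtain ⟨c, f, hc, hc0, hDc, hcN, hf⟩ : ∃ (c : B) (f : G), c ∈ 𝒜 f ∧ c ≠ 0 ∧ D c = 0 ∧
      D s ^ N ∣ c ∧ f + (e + d) - m • e ∈ H := by
    refine ⟨D s ^ (N * (v + 1) + v) * α, _, gr_mul 𝒜 (gr_pow 𝒜 ha _) hα,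
      mul_ne_zero (pow_ne_zero _ ha0) hα0, ?_, ?_, ?_⟩
    · rw [lnd_mul, hDα, lnd_pow_const D hDa]; simp
    · refine dvd_mul_of_dvd_left (pow_dvd_pow _ ?_) _
      nlinarith
    · have h1 : (N + 1) • ((v + 1) • (e + d)) + (i - m • e) ∈ H :=
        H.add_mem (H.nsmul_mem hwi _) hi
      convert h1 using 1
      simp only [add_smul, smul_add, mul_smul, one_smul, smul_sub, mul_add, mul_one]
      abel
  set δ : G := f + (e + d) - m • e with hδ
  have hhomog : ∀ (j : G) (b x : B), b ∈ 𝒜 j → s ^ (m - 1) * x = c * D b → x ∈ 𝒜 (j + δ) := by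
    intro j b x hb hx
    refine gr_div 𝒜 (gr_pow 𝒜 hs (m - 1)) (pow_ne_zero _ hs0) ?_
    rw [hx]
    have := gr_mul 𝒜 hc (hd _ _ hb)
    convert this using 2
    obtain ⟨m', rfl⟩ : ∃ m', m = m' + 1 := ⟨m - 1, by omega⟩
    rw [hδ, Nat.add_sub_cancel, add_smul, one_smul]
    abel
  have hex : ∀ b ∈ verSub 𝒜 H, ∃ x ∈ verSub 𝒜 H, s ^ (m - 1) * x = c * D b := by
    intro b hb
    refine ver_ind 𝒜 (P := fun b => ∃ x ∈ verSub 𝒜 H, s ^ (m - 1) * x = c * D b) ?_ ?_ ?_ b hb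
    · exact ⟨0, zero_mem _, by simp⟩
    · intro x y hx hy
      obtain ⟨x', hx', h1⟩ := hx
      obtain ⟨y', hy', h2⟩ := hy
      exact ⟨x' + y', add_mem hx' hy', by rw [map_add, mul_add, mul_add, h1, h2]⟩
    · intro j hj x hx
      obtain ⟨y, hy⟩ := (hN x (ver_mem 𝒜 hj hx)).trans (mul_dvd_mul_right hcN (D x))
      exact ⟨y, ver_mem 𝒜 (H.add_mem hj hf) (hhomog j x y hx hy.symm), hy.symm⟩
  have hex' : ∀ b : verSub 𝒜 H, ∃ x : verSub 𝒜 H, s ^ (m - 1) * (x : B) = c * D b := by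
    intro b
    obtain ⟨x, hx, h⟩ := hex b b.2
    exact ⟨⟨x, hx⟩, h⟩
  choose ε hε using hex'
  have hsm : s ^ (m - 1) ≠ 0 := pow_ne_zero _ hs0
  let E : Derivation ℤ (verSub 𝒜 H) (verSub 𝒜 H) :=
    Derivation.mk' (AddMonoidHom.toIntLinearMap (AddMonoidHom.mk' ε (by
      intro x y
      apply Subtype.ext
      apply mul_left_cancel₀ hsm
      rw [hε]
      push_cast
      rw [map_add, mul_add, mul_add, hε, hε]))) (by
      intro x y
      apply Subtype.ext
      apply mul_left_cancel₀ hsm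
      simp only [AddMonoidHom.coe_toIntLinearMap, AddMonoidHom.mk'_apply, smul_eq_mul]
      rw [hε]
      push_cast
      rw [lnd_mul, mul_add, mul_add, mul_left_comm, mul_left_comm c, mul_left_comm _ (x : B),
        mul_left_comm _ (y : B), hε, hε])
  have hE : ∀ b, s ^ (m - 1) * (E b : B) = c * D b := hε
  clear_value E
  have hker : ∀ b, E b = 0 ↔ D b = 0 := by
    intro b
    constructor
    · intro h
      have := hE b
      rw [h] at this
      simp only [ZeroMemClass.coe_zero, mul_zero] at this
      exact (mul_eq_zero.mp this.symm).resolve_left hc0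
    · intro h
      have := hE b
      rw [h, mul_zero] at this
      exact Subtype.ext ((mul_eq_zero.mp this).resolve_left hsm)
  refine ⟨E, ?_, ⟨δ, fun j x hx => hhomog j x _ hx (hE x)⟩, ?_, hker⟩
  · have hnil : ∀ (n : ℕ) (b : verSub 𝒜 H), (⇑D)^[n] (b : B) = 0 → (⇑E)^[n] b = 0 := by
      intro n
      induction n with
      | zero => intro b hb; exact Subtype.ext hb
      | succ n ih =>
        intro b hb
        rw [Function.iterate_succ_apply]
        apply ih
        by_cases h0 : (E b : B) = 0
        · rw [h0, lnd_iter_zero]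
        refine lnd_of_mul D hD (y := s ^ (m - 1)) h0 hsm ?_
        rw [mul_comm, hE, lnd_iter_const D _ _ _ hDc, ← Function.iterate_succ_apply, hb, mul_zero]
    intro b
    obtain ⟨n, hn, h⟩ := hD b
    exact ⟨n, hn, hnil n b h⟩
  · intro hE0
    apply ha0
    refine ver_const 𝒜 hH D hs fun n hn => ?_
    have := (hker ⟨s ^ n, hn⟩).mp (by rw [hE0]; rfl)
    exact this

end PartA

universe u

section PartD

theorem exists_order_embed {G : Type u} [AddCommGroup G]
    (htf : ∀ (g : G) (n : ℕ), 0 < n → n • g = 0 → g = 0) :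
    ∃ (L : Type u) (_ : AddCommGroup L) (_ : LinearOrder L) (_ : IsOrderedAddMonoid L)
      (φ : G →+ L), Function.Injective φ := by
  classical
  let V := TensorProduct ℤ ℚ G
  let bas := Module.Basis.ofVectorSpace ℚ V
  let _ : LinearOrder (Module.Basis.ofVectorSpaceIndex ℚ V) := IsWellOrder.linearOrder WellOrderingRel
  refine ⟨Lex (Module.Basis.ofVectorSpaceIndex ℚ V →₀ ℚ), inferInstance, inferInstance,
    inferInstance, ?_⟩
  let f : G →+ V := (TensorProduct.mk ℤ ℚ G 1).toAddMonoidHom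
  have hf : Function.Injective f := by
    rw [injective_iff_map_eq_zero]
    intro g hg
    have hg' : TensorProduct.mk ℤ ℚ G 1 g = 0 := hg
    rw [IsLocalizedModule.eq_zero_iff (nonZeroDivisors ℤ)] at hg'
    obtain ⟨c, hc⟩ := hg'
    have hc0 : (c : ℤ) ≠ 0 := nonZeroDivisors.coe_ne_zero c
    refine htf g (c : ℤ).natAbs (Int.natAbs_pos.mpr hc0) ?_
    have hc' : (c : ℤ) • g = 0 := hc
    rcases Int.natAbs_eq (c : ℤ) with h | h
    · rw [← natCast_zsmul, ← h, hc']
    · rw [← natCast_zsmul, show (((c : ℤ).natAbs : ℕ) : ℤ) = -(c : ℤ) by omega, neg_zsmul, hc',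
        neg_zero]
  refine ⟨AddMonoidHom.mk' (fun g => toLex (bas.repr (f g))) ?_, ?_⟩
  · intro x y
    simp
  · intro x y h
    exact hf (bas.repr.injective (toLex.injective h))

variable {G : Type*} [AddCommGroup G] [DecidableEq G]
  {B : Type*} [CommRing B] (𝒜 : G → AddSubgroup B) [GradedRing 𝒜]

/-- The degree `d` part of an additive endomorphism. -/
def degPart (D : B →+ B) (d : G) : B →+ B :=
  (DirectSum.toAddMonoid (fun i =>
    ((GradedRing.proj 𝒜 (i + d)).comp D).comp (𝒜 i).subtype)).comp
    (DirectSum.decomposeAddEquiv 𝒜).toAddMonoidHom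

theorem degPart_apply (D : B →+ B) (d : G) {i : G} {x : B} (hx : x ∈ 𝒜 i) :
    degPart 𝒜 D d x = GradedRing.proj 𝒜 (i + d) (D x) := by
  have : DirectSum.decomposeAddEquiv 𝒜 x = DirectSum.of (fun i => 𝒜 i) i ⟨x, hx⟩ :=
    DirectSum.decompose_of_mem 𝒜 hx
  simp only [degPart, AddMonoidHom.comp_apply, AddEquiv.toAddMonoidHom_eq_coe,
    AddMonoidHom.coe_coe, this, DirectSum.toAddMonoid_of]
  rfl

theorem degPart_mul (D : Derivation ℤ B B) (d : G) (x y : B) :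
    degPart 𝒜 (D : B →ₗ[ℤ] B).toAddMonoidHom d (x * y) =
      x * degPart 𝒜 (D : B →ₗ[ℤ] B).toAddMonoidHom d y
      + y * degPart 𝒜 (D : B →ₗ[ℤ] B).toAddMonoidHom d x := by
  induction x using gr_ind 𝒜 with
  | h0 => simp
  | ha x x' hx hx' => rw [add_mul, map_add, hx, hx', map_add]; ring
  | hh i x hx =>
    induction y using gr_ind 𝒜 with
    | h0 => simp
    | ha y y' hy hy' => rw [mul_add, map_add, hy, hy', map_add]; ring
    | hh j y hy =>
      rw [degPart_apply 𝒜 _ _ (gr_mul 𝒜 hx hy), degPart_apply 𝒜 _ _ hx, degPart_apply 𝒜 _ _ hy,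
        ← gr_proj_mul 𝒜 hx, ← gr_proj_mul 𝒜 hy, show j + (i + d) = i + j + d by abel,
        ← add_assoc, ← map_add]
      congr 1
      exact lnd_mul D x y

/-- The degree `d` part of a derivation. -/
def degDer (D : Derivation ℤ B B) (d : G) : Derivation ℤ B B :=
  Derivation.mk' (degPart 𝒜 (D : B →ₗ[ℤ] B).toAddMonoidHom d).toIntLinearMap (degPart_mul 𝒜 D d)

theorem degDer_apply (D : Derivation ℤ B B) (d : G) {i : G} {x : B} (hx : x ∈ 𝒜 i) :
    degDer 𝒜 D d x = GradedRing.proj 𝒜 (i + d) (D x) :=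
  degPart_apply 𝒜 _ d hx

theorem degDer_finite {k : Type*} [Field k] [Algebra k B] [Algebra.FiniteType k B]
    (hoverk : ∀ c : k, algebraMap k B c ∈ 𝒜 0) (D : Derivation ℤ B B)
    (hk : ∀ c : k, D (algebraMap k B c) = 0) :
    ∃ T : Finset G, ∀ d, degDer 𝒜 D d ≠ 0 → d ∈ T := by
  have hpt : ∀ x : B, ∃ T : Finset G, ∀ d, d ∉ T → degDer 𝒜 D d x = 0 := by
    intro x
    induction x using gr_ind 𝒜 with
    | h0 => exact ⟨∅, by simp⟩
    | ha x y hx hy =>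
      obtain ⟨T₁, h₁⟩ := hx
      obtain ⟨T₂, h₂⟩ := hy
      refine ⟨T₁ ∪ T₂, fun d hd => ?_⟩
      rw [Finset.mem_union, not_or] at hd
      rw [map_add, h₁ d hd.1, h₂ d hd.2, add_zero]
    | hh i x hx =>
      obtain ⟨T, hT, _⟩ := gr_sum 𝒜 (D x)
      refine ⟨T.image (fun g => g - i), fun d hd => ?_⟩
      rw [degDer_apply 𝒜 D d hx]
      apply hT
      intro h
      exact hd (Finset.mem_image.mpr ⟨_, h, by abel⟩)
  choose T hT using hpt
  obtain ⟨F, hF⟩ := (Algebra.FiniteType.out : (⊤ : Subalgebra k B).FG)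
  refine ⟨F.biUnion T, fun d hd => ?_⟩
  by_contra hc
  apply hd
  ext x
  have hx : x ∈ Algebra.adjoin k (F : Set B) := by rw [hF]; trivial
  simp only [Derivation.coe_zero, Pi.zero_apply]
  induction hx using Algebra.adjoin_induction with
  | mem x hx => exact hT x d fun h => hc (Finset.mem_biUnion.mpr ⟨x, hx, h⟩)
  | algebraMap r => rw [degDer_apply 𝒜 D d (hoverk r), hk, map_zero]
  | add x y _ _ hx hy => rw [map_add, hx, hy, add_zero]
  | mul x y _ _ hx hy => rw [lnd_mul, hx, hy]; simp

theorem desc_d {k : Type*} [Field k] [IsDomain B] [CharZero B] [Algebra k B]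
    [Algebra.FiniteType k B]
    (hoverk : ∀ c : k, algebraMap k B c ∈ 𝒜 0)
    (htf : ∀ (g : G) (n : ℕ), 0 < n → n • g = 0 → g = 0)
    (D : Derivation ℤ B B) (hD : IsLND D) (hne : D ≠ 0) :
    ∃ D' : Derivation ℤ B B, IsLND D' ∧ IsHomogDer 𝒜 D' ∧ D' ≠ 0 := by
  classical
  obtain ⟨L, _, _, _, φ, hφ⟩ := exists_order_embed htf
  obtain ⟨T, hT⟩ := degDer_finite 𝒜 hoverk D (lnd_unit D hD)
  have hex : ∃ d, degDer 𝒜 D d ≠ 0 := by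
    by_contra hc
    push Not at hc
    apply hne
    ext x
    simp only [Derivation.coe_zero, Pi.zero_apply]
    induction x using gr_ind 𝒜 with
    | h0 => simp
    | ha x y hx hy => rw [map_add, hx, hy, add_zero]
    | hh i x hx =>
      obtain ⟨S, _, hS⟩ := gr_sum 𝒜 (D x)
      rw [hS]
      refine Finset.sum_eq_zero fun g _ => ?_
      have := degDer_apply 𝒜 D (g - i) hx
      rw [hc, add_sub_cancel] at this
      rw [← this]; rfl
  obtain ⟨d₀, hd₀⟩ := hex
  obtain ⟨d, hdm, hmax⟩ := Finset.exists_max_image (T.filter fun d => degDer 𝒜 D d ≠ 0) φ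
    ⟨d₀, Finset.mem_filter.mpr ⟨hT d₀ hd₀, hd₀⟩⟩
  have hd0 : degDer 𝒜 D d ≠ 0 := (Finset.mem_filter.mp hdm).2
  have htop : ∀ d', φ d < φ d' → degDer 𝒜 D d' = 0 := by
    intro d' h
    by_contra hc
    exact absurd (hmax d' (Finset.mem_filter.mpr ⟨hT d' hc, hc⟩)) (not_le.mpr h)
  -- pieces of `D x` of too large degree vanish
  have hbig : ∀ (i g : G) (x : B), x ∈ 𝒜 i → φ i + φ d < φ g → GradedRing.proj 𝒜 g (D x) = 0 := by
    intro i g x hx h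
    have h1 := degDer_apply 𝒜 D (g - i) hx
    rw [htop (g - i) (by rw [map_sub]; exact lt_sub_iff_add_lt'.mpr h), add_sub_cancel] at h1
    rw [← h1]; rfl
  have hstep : ∀ (i : G) (x : B), (∀ g, φ i < φ g → GradedRing.proj 𝒜 g x = 0) →
      (∀ g, φ (i + d) < φ g → GradedRing.proj 𝒜 g (D x) = 0) ∧
      GradedRing.proj 𝒜 (i + d) (D x) = degDer 𝒜 D d (GradedRing.proj 𝒜 i x) := by
    intro i x hx
    obtain ⟨S, hS0, hS⟩ := gr_sum 𝒜 x
    have hDx : D x = ∑ j ∈ S, D (GradedRing.proj 𝒜 j x) := by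
      conv_lhs => rw [hS]
      rw [map_sum]
    constructor
    · intro g hg
      rw [hDx, map_sum]
      refine Finset.sum_eq_zero fun j _ => ?_
      by_cases hj : φ i < φ j
      · rw [hx j hj]; simp
      · refine hbig j g _ (gr_proj_mem 𝒜 j x) (lt_of_le_of_lt ?_ hg)
        rw [map_add]
        exact add_le_add_left (not_lt.mp hj) _
    · rw [degDer_apply 𝒜 D d (gr_proj_mem 𝒜 i x), hDx, map_sum]
      refine Finset.sum_eq_single i (fun j _ hji => ?_) (fun hi => ?_)
      · by_cases hj : φ i < φ j
        · rw [hx j hj]; simp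
        · refine hbig j _ _ (gr_proj_mem 𝒜 j x) ?_
          rw [map_add]
          exact add_lt_add_left (lt_of_le_of_ne (not_lt.mp hj) (fun h => hji (hφ h))) _
      · rw [hS0 i hi]; simp
  have hiter : ∀ (n : ℕ) (i : G) (x : B), x ∈ 𝒜 i →
      (∀ g, φ (i + n • d) < φ g → GradedRing.proj 𝒜 g ((⇑D)^[n] x) = 0) ∧
      GradedRing.proj 𝒜 (i + n • d) ((⇑D)^[n] x) = (⇑(degDer 𝒜 D d))^[n] x := by
    intro n i x hx
    induction n with
    | zero =>
      simp only [zero_smul, add_zero, Function.iterate_zero, id_eq]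
      refine ⟨fun g hg => gr_proj_ne 𝒜 hx ?_, gr_proj_same 𝒜 hx⟩
      rintro rfl
      exact lt_irrefl _ hg
    | succ n ih =>
      have := hstep (i + n • d) _ ih.1
      rw [Function.iterate_succ_apply', Function.iterate_succ_apply', ← ih.2, add_smul, one_smul,
        ← add_assoc]
      exact this
  refine ⟨degDer 𝒜 D d, ?_, ⟨d, fun i x hx => ?_⟩, hd0⟩
  · intro b
    induction b using gr_ind 𝒜 with
    | h0 => exact ⟨1, one_pos, by simp⟩
    | ha x y hx hy =>
      obtain ⟨n₁, hn₁, h₁⟩ := hx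
      obtain ⟨n₂, hn₂, h₂⟩ := hy
      refine ⟨n₁ + n₂, by omega, ?_⟩
      rw [lnd_iter_add, lnd_iter_le _ (by omega) h₁, lnd_iter_le _ (by omega) h₂, add_zero]
    | hh i x hx =>
      obtain ⟨n, hn, h⟩ := hD x
      refine ⟨n, hn, ?_⟩
      rw [← (hiter n i x hx).2, h, map_zero]
  · rw [degDer_apply 𝒜 D d hx]
    exact gr_proj_mem 𝒜 _ _

end PartD

/-- **Descent Theorem.**  Let k be a field of characteristic 0, G an abelian group,
B an affine k-domain graded over k by G, and H ∈ 𝕋(B).  Each A ∈ KHLND(B) is a graded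
subring of B, so that A^{(H)} = ⊕_{i ∈ H}(A ∩ B_i) = A ∩ B^{(H)}, formalized as the
comap of A along the inclusion B^{(H)} → B.  Then:
(a) A^{(H)} ∈ KHLND(B^{(H)}) for every A ∈ KHLND(B);
(b) the map KHLND(B) → KHLND(B^{(H)}), A ↦ A^{(H)}, is injective;
(c) if HLND(B) ≠ {0} then HLND(B^{(H)}) ≠ {0};
(d) if G is torsion-free and B is non-rigid, then B^{(H)} is non-rigid. -/
theorem descent_theorem
    {k : Type*} [Field k] [CharZero k]
    {G : Type*} [AddCommGroup G] [DecidableEq G]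
    {B : Type*} [CommRing B] [IsDomain B] [Algebra k B] [Algebra.FiniteType k B]
    (𝒜 : G → AddSubgroup B) [GradedRing 𝒜]
    (hoverk : ∀ c : k, algebraMap k B c ∈ 𝒜 0)
    (H : AddSubgroup G) (hH : Tmem 𝒜 H) :
    (∀ A ∈ KHLND 𝒜, A.comap (verSub 𝒜 H).subtype ∈ KHLNDOn 𝒜 (verSub 𝒜 H)) ∧
    (∀ A₁ ∈ KHLND 𝒜, ∀ A₂ ∈ KHLND 𝒜,
      A₁.comap (verSub 𝒜 H).subtype = A₂.comap (verSub 𝒜 H).subtype → A₁ = A₂) ∧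
    ((∃ D : Derivation ℤ B B, IsLND D ∧ IsHomogDer 𝒜 D ∧ D ≠ 0) →
      ∃ D : Derivation ℤ (verSub 𝒜 H) (verSub 𝒜 H),
        IsLND D ∧ IsHomogDerOn 𝒜 (verSub 𝒜 H) D ∧ D ≠ 0) ∧
    ((∀ (g : G) (n : ℕ), 0 < n → n • g = 0 → g = 0) →
      (∃ D : Derivation ℤ B B, IsLND D ∧ D ≠ 0) →
      ∃ D : Derivation ℤ (verSub 𝒜 H) (verSub 𝒜 H), IsLND D ∧ D ≠ 0) := by
  have : CharZero B := charZero_of_injective_algebraMap (algebraMap k B).injective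
  have hc : (∃ D : Derivation ℤ B B, IsLND D ∧ IsHomogDer 𝒜 D ∧ D ≠ 0) →
      ∃ D : Derivation ℤ (verSub 𝒜 H) (verSub 𝒜 H),
        IsLND D ∧ IsHomogDerOn 𝒜 (verSub 𝒜 H) D ∧ D ≠ 0 := by
    rintro ⟨D, h1, h2, h3⟩
    obtain ⟨E, hE1, hE2, hE3, _⟩ := desc_a 𝒜 hoverk H hH D h1 h2 h3
    exact ⟨E, hE1, hE2, hE3⟩
  refine ⟨?_, ?_, hc, ?_⟩
  · rintro A ⟨D, h1, h2, h3, rfl⟩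
    obtain ⟨E, hE1, hE2, hE3, hE4⟩ := desc_a 𝒜 hoverk H hH D h1 h2 h3
    refine ⟨E, hE1, hE2, hE3, ?_⟩
    ext x
    exact (hE4 x).symm
  · rintro A₁ ⟨D₁, _, h12, _, rfl⟩ A₂ ⟨D₂, _, h22, _, rfl⟩ h
    have hiff : ∀ x ∈ verSub 𝒜 H, D₁ x = 0 ↔ D₂ x = 0 := by
      intro x hx
      exact SetLike.ext_iff.mp h ⟨x, hx⟩
    ext x
    exact ⟨fun hx => desc_b 𝒜 hH D₁ D₂ h12 (fun y hy => (hiff y hy).mp) x hx,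
      fun hx => desc_b 𝒜 hH D₂ D₁ h22 (fun y hy => (hiff y hy).mpr) x hx⟩
  · rintro htf ⟨D, h1, h2⟩
    obtain ⟨E, hE1, _, hE3⟩ := hc (desc_d 𝒜 hoverk htf D h1 h2)
    exact ⟨E, hE1, hE3⟩
end
end

section
/- Let B be an integral domain of characteristic 0 graded by an abelian group G. Then: (a) for each nonzero D ∈ HLND(B), there exists a height-1 homogeneous prime ideal p of B such that some homogeneous element t ∈ p satisfies D(t) ≠ 0 and D²(t) = 0, and such that 𝔾(B/p) = 𝔾(ker D); (b) 𝔾̄(B) ⊆ 𝔾(ker D) ⊆ 𝔾(B) for every D ∈ HLND(B); (c) if B is saturated in codimension 1, then 𝔾(ker D) = 𝔾(B) for every D ∈ HLND(B). -/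
noncomputable section

/-- 𝔾(ker D): the subgroup of G generated by the degrees of the nonzero homogeneous
elements of the kernel of D. -/
def kerGsub {G : Type*} [AddCommGroup G] {B : Type*} [CommRing B]
    (𝒜 : G → AddSubgroup B) (D : Derivation ℤ B B) : AddSubgroup G :=
  AddSubgroup.closure { i : G | ∃ x ∈ 𝒜 i, x ≠ 0 ∧ D x = 0 }

/-- An ideal is homogeneous if it is generated by homogeneous elements. -/
def IsHomogIdeal {G : Type*} [AddCommGroup G] {B : Type*} [CommRing B]
    (𝒜 : G → AddSubgroup B) (I : Ideal B) : Prop :=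
  I = Ideal.span { x : B | x ∈ I ∧ ∃ i, x ∈ 𝒜 i }

section Aux

variable {B : Type*} [CommRing B]

lemma aux_iter_mul_left (D : Derivation ℤ B B) {c : B} (hc : D c = 0) (x : B) (n : ℕ) :
    (⇑D)^[n] (c * x) = c * (⇑D)^[n] x := by
  induction n with
  | zero => simp
  | succ n ih => rw [Function.iterate_succ_apply', Function.iterate_succ_apply', ih]; simp [hc]

lemma aux_iter_t_mul (D : Derivation ℤ B B) {t : B} (ht : D (D t) = 0) (x : B) (n : ℕ) :
    (⇑D)^[n + 1] (t * x) = t * (⇑D)^[n + 1] x + (n + 1) * D t * (⇑D)^[n] x := by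
  induction n with
  | zero => simp [mul_comm]
  | succ n ih =>
    rw [Function.iterate_succ_apply', ih, Function.iterate_succ_apply' (n := n + 1),
      Function.iterate_succ_apply' (n := n)]
    simp [ht]
    ring

lemma aux_iter_sub (D : Derivation ℤ B B) (x y : B) (n : ℕ) :
    (⇑D)^[n] (x - y) = (⇑D)^[n] x - (⇑D)^[n] y := by
  induction n with
  | zero => simp
  | succ n ih => simp [Function.iterate_succ_apply', ih]

lemma aux_iter_zero (D : Derivation ℤ B B) {x : B} {n m : ℕ} (h : (⇑D)^[n] x = 0) (hnm : n ≤ m) :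
    (⇑D)^[m] x = 0 := by
  induction m, hnm using Nat.le_induction with
  | base => exact h
  | succ m _ ih => rw [Function.iterate_succ_apply', ih, map_zero]

lemma aux_iter_pow (D : Derivation ℤ B B) {t : B} (ht : D (D t) = 0) (n : ℕ) :
    (⇑D)^[n] (t ^ n) = (n.factorial : B) * (D t) ^ n ∧ (⇑D)^[n + 1] (t ^ n) = 0 := by
  have hs : ∀ n : ℕ, D ((n.factorial : B) * (D t) ^ n) = 0 := by
    intro n; simp [Derivation.leibniz_pow, ht]
  induction n with
  | zero => simp
  | succ n ih =>
    have h1 : (⇑D)^[n + 1] (t ^ (n + 1)) = ((n + 1).factorial : B) * (D t) ^ (n + 1) := by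
      rw [pow_succ', aux_iter_t_mul D ht, ih.2, ih.1, Nat.factorial_succ]
      push_cast
      ring
    refine ⟨h1, ?_⟩
    rw [Function.iterate_succ_apply', h1, hs]

variable [IsDomain B] [CharZero B]

/-- multiplication by a local slice raises the nilpotency order. -/
lemma aux_drop (D : Derivation ℤ B B) (hD : IsLND D) {t : B} (hs : D t ≠ 0) (ht : D (D t) = 0)
    (x : B) (n : ℕ) (h : (⇑D)^[n + 1] (t * x) = 0) : (⇑D)^[n] x = 0 := by
  obtain ⟨N, -, hN⟩ := hD x
  have key : ∀ k : ℕ, (⇑D)^[n + k] x = 0 → (⇑D)^[n] x = 0 := by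
    intro k
    induction k with
    | zero => exact id
    | succ k ih =>
      intro hk
      apply ih
      have h2 := aux_iter_t_mul D ht x (n + k)
      rw [aux_iter_zero D h (by omega), show (⇑D)^[n + k + 1] x = 0 from hk, mul_zero,
        zero_add] at h2
      have h3 : ((n + k : ℕ) : B) + 1 ≠ 0 := by exact_mod_cast Nat.succ_ne_zero (n + k)
      exact (mul_eq_zero.1 h2.symm).resolve_left (mul_ne_zero h3 hs)
  exact key N (aux_iter_zero D hN (by omega))

lemma aux_ker_t (D : Derivation ℤ B B) (hD : IsLND D) {t : B} (hs : D t ≠ 0) (ht : D (D t) = 0)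
    (e : B) (h : D (t * e) = 0) : t * e = 0 := by
  have := aux_drop D hD hs ht e 0 (by simpa using h)
  simp only [Function.iterate_zero, id] at this
  rw [this, mul_zero]

variable {G : Type*} [AddCommGroup G] [DecidableEq G] (𝒜 : G → AddSubgroup B) [GradedRing 𝒜]

lemma aux_hom (D : Derivation ℤ B B) {d : G}
    (hd : ∀ (i : G) (x : B), x ∈ 𝒜 i → D x ∈ 𝒜 (i + d)) {l : G} {t : B} (htl : t ∈ 𝒜 l)
    (hs : D t ≠ 0) (ht : D (D t) = 0) (n : ℕ) :
    ∀ (i : G) (b : B), b ∈ 𝒜 i → (⇑D)^[n] b = 0 →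
      ∃ (k : G) (c a e : B), c ∈ 𝒜 k ∧ c ≠ 0 ∧ D c = 0 ∧ a ∈ 𝒜 (i + k) ∧ D a = 0 ∧
        c * b = a + t * e := by
  have hit : ∀ (n : ℕ) (i : G) (b : B), b ∈ 𝒜 i → (⇑D)^[n] b ∈ 𝒜 (i + n • d) := by
    intro n
    induction n with
    | zero => intro i b hb; simpa using hb
    | succ n ih =>
      intro i b hb
      rw [Function.iterate_succ_apply', succ_nsmul, ← add_assoc]
      exact hd _ _ (ih i b hb)
  induction n with
  | zero =>
    intro i b hb h
    have hb0 : b = 0 := by simpa using h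
    exact ⟨0, 1, 0, 0, SetLike.one_mem_graded 𝒜, one_ne_zero, by simp, zero_mem _, by simp,
      by simp [hb0]⟩
  | succ n ih =>
    intro i b hb h
    rcases Nat.eq_zero_or_pos n with rfl | hn
    · exact ⟨0, 1, b, 0, SetLike.one_mem_graded 𝒜, one_ne_zero, by simp, by simpa using hb,
        by simpa using h, by simp⟩
    set α := (⇑D)^[n] b with hα
    have hDα : D α = 0 := by rw [hα, ← Function.iterate_succ_apply' (⇑D)]; exact h
    set f : B := (n.factorial : B) * (D t) ^ n with hf
    have hDf : D f = 0 := by simp [hf, Derivation.leibniz_pow, ht]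
    have hf0 : f ≠ 0 := mul_ne_zero (by exact_mod_cast n.factorial_ne_zero) (pow_ne_zero _ hs)
    have hfm : f ∈ 𝒜 (n • (l + d)) := by
      rw [hf, ← nsmul_eq_mul]
      exact AddSubgroup.nsmul_mem _ (SetLike.pow_mem_graded n (hd _ _ htl)) _
    have h1 : f * b - α * t ^ n ∈ 𝒜 (i + n • (l + d)) := by
      refine sub_mem ?_ ?_
      · rw [add_comm]; exact SetLike.mul_mem_graded hfm hb
      · have := SetLike.mul_mem_graded (hit n i b hb) (SetLike.pow_mem_graded n htl)
        rwa [show i + n • d + n • l = i + n • (l + d) by rw [nsmul_add]; abel] at this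
    have h2 : (⇑D)^[n] (f * b - α * t ^ n) = 0 := by
      rw [aux_iter_sub, aux_iter_mul_left D hDf, aux_iter_mul_left D hDα, (aux_iter_pow D ht n).1,
        ← hα, ← hf]
      ring
    obtain ⟨k, c, a, e, hck, hc0, hDc, hak, hDa, he⟩ := ih _ _ h1 h2
    refine ⟨k + n • (l + d), c * f, a, e + c * α * t ^ (n - 1), SetLike.mul_mem_graded hck hfm,
      mul_ne_zero hc0 hf0, by simp [hDc, hDf], ?_, hDa, ?_⟩
    · rwa [show i + (k + n • (l + d)) = i + n • (l + d) + k by abel]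
    · obtain ⟨m, rfl⟩ : ∃ m, n = m + 1 := ⟨n - 1, by omega⟩
      rw [Nat.add_sub_cancel]
      linear_combination he

/-- non-homogeneous version -/
lemma aux_gen (D : Derivation ℤ B B) (hD : IsLND D) {d : G}
    (hd : ∀ (i : G) (x : B), x ∈ 𝒜 i → D x ∈ 𝒜 (i + d)) {l : G} {t : B} (htl : t ∈ 𝒜 l)
    (hs : D t ≠ 0) (ht : D (D t) = 0) (b : B) :
      ∃ (k : G) (c a e : B), c ∈ 𝒜 k ∧ c ≠ 0 ∧ D c = 0 ∧ D a = 0 ∧ c * b = a + t * e := by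
  induction b using DirectSum.Decomposition.inductionOn 𝒜 with
  | zero => exact ⟨0, 1, 0, 0, SetLike.one_mem_graded 𝒜, one_ne_zero, by simp, by simp, by simp⟩
  | @homogeneous i m =>
    obtain ⟨n, -, hn⟩ := hD (m : B)
    obtain ⟨k, c, a, e, h1, h2, h3, -, h4, h5⟩ := aux_hom 𝒜 D hd htl hs ht n i m m.2 hn
    exact ⟨k, c, a, e, h1, h2, h3, h4, h5⟩
  | add x y hx hy =>
    obtain ⟨k, c, a, e, h1, h2, h3, h4, h5⟩ := hx
    obtain ⟨k', c', a', e', h1', h2', h3', h4', h5'⟩ := hy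
    refine ⟨k + k', c * c', c' * a + c * a', c' * e + c * e', SetLike.mul_mem_graded h1 h1',
      mul_ne_zero h2 h2', by simp [h3, h3'], by simp [h3, h3', h4, h4'], ?_⟩
    linear_combination c' * h5 + c * h5'

/-- The ideal of elements multiplied into `tB` by a nonzero homogeneous element of the kernel. -/
def auxP (D : Derivation ℤ B B) (t : B) : Ideal B where
  carrier := {b | ∃ (k : G) (c e : B), c ∈ 𝒜 k ∧ c ≠ 0 ∧ D c = 0 ∧ c * b = t * e}
  zero_mem' := ⟨0, 1, 0, SetLike.one_mem_graded 𝒜, one_ne_zero, by simp, by simp⟩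
  add_mem' := by
    rintro x y ⟨k, c, e, h1, h2, h3, h5⟩ ⟨k', c', e', h1', h2', h3', h5'⟩
    refine ⟨k + k', c * c', c' * e + c * e', SetLike.mul_mem_graded h1 h1',
      mul_ne_zero h2 h2', by simp [h3, h3'], ?_⟩
    linear_combination c' * h5 + c * h5'
  smul_mem' := by
    rintro r x ⟨k, c, e, h1, h2, h3, h5⟩
    refine ⟨k, c, r * e, h1, h2, h3, ?_⟩
    rw [smul_eq_mul]
    linear_combination r * h5

lemma mem_auxP (D : Derivation ℤ B B) (t b : B) : b ∈ auxP 𝒜 D t ↔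
    ∃ (k : G) (c e : B), c ∈ 𝒜 k ∧ c ≠ 0 ∧ D c = 0 ∧ c * b = t * e := Iff.rfl

lemma auxP_ker (D : Derivation ℤ B B) (hD : IsLND D) {t : B}
    (hs : D t ≠ 0) (ht : D (D t) = 0) {a : B} (ha : D a = 0) (h : a ∈ auxP 𝒜 D t) : a = 0 := by
  obtain ⟨k, c, e, h1, h2, h3, h5⟩ := h
  have := aux_ker_t D hD hs ht e (by rw [← h5]; simp [ha, h3])
  rw [← h5] at this
  simpa [h2] using this

lemma auxP_prime (D : Derivation ℤ B B) (hD : IsLND D) {d : G}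
    (hd : ∀ (i : G) (x : B), x ∈ 𝒜 i → D x ∈ 𝒜 (i + d)) {l : G} {t : B} (htl : t ∈ 𝒜 l)
    (hs : D t ≠ 0) (ht : D (D t) = 0) : (auxP 𝒜 D t).IsPrime := by
  constructor
  · rw [Ideal.ne_top_iff_one]
    intro h
    exact one_ne_zero (auxP_ker 𝒜 D hD hs ht (by simp) h)
  · intro x y hxy
    obtain ⟨k, c, a, e, h1, h2, h3, h4, h5⟩ := aux_gen 𝒜 D hD hd htl hs ht x
    obtain ⟨k', c', a', e', h1', h2', h3', h4', h5'⟩ := aux_gen 𝒜 D hD hd htl hs ht y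
    obtain ⟨k'', c'', e'', h1'', h2'', h3'', h5''⟩ := hxy
    have hz : c'' * (a * a') = 0 := by
      have hE : c'' * (a * a') =
          t * (c * c' * e'' - c'' * (a * e' + e * a' + t * e * e')) := by
        linear_combination c * c' * h5'' - c'' * c' * y * h5 - c'' * (a + t * e) * h5'
      rw [hE]
      refine aux_ker_t D hD hs ht _ ?_
      rw [← hE]
      simp [h3'', h4, h4']
    rcases mul_eq_zero.1 ((mul_eq_zero.1 hz).resolve_left h2'') with h | h
    · left; exact ⟨k, c, e, h1, h2, h3, by simpa [h] using h5⟩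
    · right; exact ⟨k', c', e', h1', h2', h3', by simpa [h] using h5'⟩

lemma auxP_height (D : Derivation ℤ B B) (hD : IsLND D) {d : G}
    (hd : ∀ (i : G) (x : B), x ∈ 𝒜 i → D x ∈ 𝒜 (i + d)) {l : G} {t : B} (htl : t ∈ 𝒜 l)
    (hs : D t ≠ 0) (ht : D (D t) = 0) : heightOne (auxP 𝒜 D t) := by
  have htp : t ∈ auxP 𝒜 D t :=
    ⟨0, 1, 1, SetLike.one_mem_graded 𝒜, one_ne_zero, by simp, by ring⟩
  have ht0 : t ≠ 0 := by rintro rfl; simp at hs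
  refine ⟨auxP_prime 𝒜 D hD hd htl hs ht, ⟨⊥, Ideal.isPrime_bot, ?_⟩, ?_⟩
  · rw [bot_lt_iff_ne_bot]
    intro h
    rw [h] at htp
    exact ht0 (by simpa using htp)
  · intro q r _ hr hqr hrp
    have hc : ∀ c, c ≠ 0 → D c = 0 → c ∉ r := fun c h0 h1 h2 =>
      h0 (auxP_ker 𝒜 D hD hs ht h1 (hrp.le h2))
    have htr : t ∉ r := by
      intro htr
      refine absurd hrp (not_lt_of_ge ?_)
      rintro b ⟨k, c, e, h1, h2, h3, h5⟩
      refine (hr.mem_or_mem (x := c) (y := b) ?_).resolve_left (hc c h2 h3)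
      rw [h5]
      exact r.mul_mem_right _ htr
    have key : ∀ (n : ℕ) (x : B), x ∈ r → (⇑D)^[n] x = 0 → x = 0 := by
      intro n
      induction n with
      | zero => intro x _ h; simpa using h
      | succ n ih =>
        intro x hx h
        obtain ⟨k, c, e, h1, h2, h3, h5⟩ := hrp.le hx
        have her : e ∈ r := by
          refine (hr.mem_or_mem (x := t) (y := e) ?_).resolve_left htr
          rw [← h5]
          exact r.mul_mem_left _ hx
        have he : e = 0 := by
          refine ih e her (aux_drop D hD hs ht e n ?_)
          rw [← h5, aux_iter_mul_left D h3, h, mul_zero]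
        rw [he, mul_zero] at h5
        exact (mul_eq_zero.1 h5).resolve_left h2
    have hrb : r = ⊥ := by
      rw [eq_bot_iff]
      intro x hx
      obtain ⟨n, -, hn⟩ := hD x
      simpa using key n x hx hn
    rw [hrb] at hqr
    exact not_lt_bot hqr

lemma auxP_homog (D : Derivation ℤ B B) {l : G} {t : B} (htl : t ∈ 𝒜 l) :
    IsHomogIdeal 𝒜 (auxP 𝒜 D t) := by
  apply le_antisymm
  · rintro b ⟨k, c, e, h1, h2, h3, h5⟩
    classical
    rw [← DirectSum.sum_support_decompose 𝒜 b]
    refine Ideal.sum_mem _ fun i _ => Ideal.subset_span ⟨?_, i, SetLike.coe_mem _⟩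
    refine ⟨k, c, (DirectSum.decompose 𝒜 e (k + i - l) : B), h1, h2, h3, ?_⟩
    rw [← DirectSum.coe_decompose_mul_add_of_left_mem 𝒜 h1,
      ← DirectSum.coe_decompose_mul_add_of_left_mem 𝒜 htl, h5, add_sub_cancel]
  · rw [Ideal.span_le]
    exact fun x hx => hx.1

lemma auxP_Mbar (D : Derivation ℤ B B) (hD : IsLND D) {d : G}
    (hd : ∀ (i : G) (x : B), x ∈ 𝒜 i → D x ∈ 𝒜 (i + d)) {l : G} {t : B} (htl : t ∈ 𝒜 l)
    (hs : D t ≠ 0) (ht : D (D t) = 0) : Mbar 𝒜 (auxP 𝒜 D t) = kerGsub 𝒜 D := by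
  apply le_antisymm
  · refine (AddSubgroup.closure_le _).2 ?_
    intro i hi
    obtain ⟨b, hb, hbp⟩ := Set.not_subset.1 hi
    obtain ⟨n, -, hn⟩ := hD b
    obtain ⟨k, c, a, e, h1, h2, h3, h4, h5, h6⟩ := aux_hom 𝒜 D hd htl hs ht n i b hb hn
    have ha : a ≠ 0 := by
      rintro rfl
      exact hbp ⟨k, c, e, h1, h2, h3, by simpa using h6⟩
    have hk : k ∈ kerGsub 𝒜 D := AddSubgroup.subset_closure ⟨c, h1, h2, h3⟩
    have hik : i + k ∈ kerGsub 𝒜 D := AddSubgroup.subset_closure ⟨a, h4, ha, h5⟩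
    have := sub_mem hik hk
    rwa [add_sub_cancel_right] at this
  · refine AddSubgroup.closure_mono ?_
    rintro i ⟨x, hx, hx0, hDx⟩ hsub
    exact hx0 (auxP_ker 𝒜 D hD hs ht hDx (hsub hx))

lemma aux_slice (D : Derivation ℤ B B) (hD : IsLND D) {d : G}
    (hd : ∀ (i : G) (x : B), x ∈ 𝒜 i → D x ∈ 𝒜 (i + d)) (h0 : D ≠ 0) :
    ∃ (l : G) (t : B), t ∈ 𝒜 l ∧ D t ≠ 0 ∧ D (D t) = 0 := by
  by_contra! hcon
  apply h0
  have key : ∀ (n : ℕ) (i : G) (x : B), x ∈ 𝒜 i → (⇑D)^[n] x = 0 → D x = 0 := by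
    intro n
    induction n with
    | zero => intro i x _ h; have : x = 0 := by simpa using h
              simp [this]
    | succ n ih =>
      intro i x hx h
      by_contra hDx
      exact hcon i x hx hDx (ih _ (D x) (hd i x hx) h)
  ext b
  induction b using DirectSum.Decomposition.inductionOn 𝒜 with
  | zero => simp
  | @homogeneous i m =>
    obtain ⟨n, -, hn⟩ := hD (m : B)
    simpa using key n i m m.2 hn
  | add x y hx hy => simpa using by rw [hx, hy]; simp

end Aux

/-- Let B be an integral domain of characteristic 0 graded by an abelian group G. Then:
(a) for each nonzero D ∈ HLND(B), there is a height-1 homogeneous prime ideal p of B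
    such that some homogeneous t ∈ p satisfies D t ≠ 0 and D² t = 0, and such that
    𝔾(B/p) = 𝔾(ker D) (note 𝔾(B/p) is the subgroup generated by { i | B_i ⊄ p },
    i.e. 𝕄̄(B,p));
(b) 𝔾̄(B) ⊆ 𝔾(ker D) ⊆ 𝔾(B) for every D ∈ HLND(B);
(c) if B is saturated in codimension 1 then 𝔾(ker D) = 𝔾(B) for every D ∈ HLND(B). -/
theorem Gbar_le_Gsub_ker
    {G : Type*} [AddCommGroup G] [DecidableEq G]
    {B : Type*} [CommRing B] [IsDomain B] [CharZero B]
    (𝒜 : G → AddSubgroup B) [GradedRing 𝒜] :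
    (∀ D : Derivation ℤ B B, IsLND D → IsHomogDer 𝒜 D → D ≠ 0 →
      ∃ p : Ideal B, heightOne p ∧ IsHomogIdeal 𝒜 p ∧
        (∃ t ∈ p, (∃ i, t ∈ 𝒜 i) ∧ D t ≠ 0 ∧ D (D t) = 0) ∧
        Mbar 𝒜 p = kerGsub 𝒜 D) ∧
    (∀ D : Derivation ℤ B B, IsLND D → IsHomogDer 𝒜 D →
      Gbar 𝒜 ≤ kerGsub 𝒜 D ∧ kerGsub 𝒜 D ≤ Gsub 𝒜) ∧
    (Gbar 𝒜 = Gsub 𝒜 →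
      ∀ D : Derivation ℤ B B, IsLND D → IsHomogDer 𝒜 D → kerGsub 𝒜 D = Gsub 𝒜) := by
  have hA : ∀ D : Derivation ℤ B B, IsLND D → IsHomogDer 𝒜 D → D ≠ 0 →
      ∃ p : Ideal B, heightOne p ∧ IsHomogIdeal 𝒜 p ∧
        (∃ t ∈ p, (∃ i, t ∈ 𝒜 i) ∧ D t ≠ 0 ∧ D (D t) = 0) ∧
        Mbar 𝒜 p = kerGsub 𝒜 D := by
    rintro D hD ⟨d, hd⟩ h0
    obtain ⟨l, t, htl, hs, ht⟩ := aux_slice 𝒜 D hD hd h0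
    exact ⟨auxP 𝒜 D t, auxP_height 𝒜 D hD hd htl hs ht, auxP_homog 𝒜 D htl,
      ⟨t, ⟨0, 1, 1, SetLike.one_mem_graded 𝒜, one_ne_zero, by simp, by ring⟩, ⟨l, htl⟩, hs, ht⟩,
      auxP_Mbar 𝒜 D hD hd htl hs ht⟩
  have hker : ∀ D : Derivation ℤ B B, kerGsub 𝒜 D ≤ Gsub 𝒜 := by
    intro D
    refine AddSubgroup.closure_mono ?_
    rintro i ⟨x, hx, hx0, -⟩ hb
    rw [hb] at hx
    exact hx0 (by simpa using hx)
  have hM : ∀ p : Ideal B, Mbar 𝒜 p ≤ Gsub 𝒜 := by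
    intro p
    refine AddSubgroup.closure_mono ?_
    intro i hi hb
    apply hi
    rw [hb]
    intro x hx
    have : x = 0 := by simpa using hx
    simp [this]
  have hGM : ∀ p : Ideal B, heightOne p → Gbar 𝒜 ≤ Mbar 𝒜 p := by
    intro p hp
    rw [Gbar, if_pos ⟨p, hp⟩]
    exact iInf_le (fun p : {p : Ideal B // heightOne p} => Mbar 𝒜 p.1) ⟨p, hp⟩
  have hGG : Gbar 𝒜 ≤ Gsub 𝒜 := by
    by_cases h : ∃ p : Ideal B, heightOne p
    · obtain ⟨p, hp⟩ := h
      exact (hGM p hp).trans (hM p)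
    · rw [Gbar, if_neg h]
  have hBb : ∀ D : Derivation ℤ B B, IsLND D → IsHomogDer 𝒜 D →
      Gbar 𝒜 ≤ kerGsub 𝒜 D ∧ kerGsub 𝒜 D ≤ Gsub 𝒜 := by
    intro D hD hH
    refine ⟨?_, hker D⟩
    by_cases h0 : D = 0
    · subst h0
      refine hGG.trans (AddSubgroup.closure_mono ?_)
      intro i hi
      obtain ⟨x, hx0⟩ := AddSubgroup.ne_bot_iff_exists_ne_zero.1 hi
      exact ⟨x.1, x.2, fun h => hx0 (Subtype.ext h), by simp⟩
    · obtain ⟨p, hp, -, -, hpe⟩ := hA D hD hH h0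
      exact hpe ▸ hGM p hp
  exact ⟨hA, hBb, fun h D hD hH => le_antisymm (hker D) (h ▸ (hBb D hD hH).1)⟩
end
end

section
/- Let B be an integral domain of characteristic 0 graded by an abelian group G, and suppose that B = R[t] is a polynomial ring in one variable t over a graded subring R of B, where t is a homogeneous element of B. Then for every H ∈ 𝕋(B), the subring R^{(H)} belongs to KHLND(B^{(H)}); that is, there exists a nonzero homogeneous locally nilpotent derivation of B^{(H)} whose kernel is R^{(H)}. -/
noncomputable section

/-- Homogeneous elements of `verSub` of degree outside `H` vanish. -/
lemma verSub_component {G : Type*} [AddCommGroup G] [DecidableEq G]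
    {B : Type*} [CommRing B] (𝒜 : G → AddSubgroup B) [GradedRing 𝒜] (H : AddSubgroup G)
    (x : B) (hx : x ∈ verSub 𝒜 H) (i : G) (hi : i ∉ H) :
    (DirectSum.decompose 𝒜 x i : B) = 0 := by
  unfold verSub at hx
  rw [Subring.mem_closure_iff] at hx
  induction hx using AddSubgroup.closure_induction with
  | mem y hy =>
    have : ∃ j ∈ H, y ∈ 𝒜 j := by
      induction hy using Submonoid.closure_induction with
      | mem y hy => simpa using hy
      | one => exact ⟨0, H.zero_mem, SetLike.GradedOne.one_mem⟩
      | mul a b _ _ ha hb =>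
        obtain ⟨j, hj, haj⟩ := ha
        obtain ⟨k, hk, hbk⟩ := hb
        exact ⟨j + k, H.add_mem hj hk, SetLike.GradedMul.mul_mem haj hbk⟩
    obtain ⟨j, hj, hy⟩ := this
    exact DirectSum.decompose_of_mem_ne 𝒜 hy (fun h => hi (h ▸ hj))
  | zero => simp
  | add a b _ _ ha hb => simp [DirectSum.decompose_add, ha, hb]
  | neg a _ ha =>
    rw [DirectSum.decompose_neg]
    change -(DirectSum.decompose 𝒜 a i : B) = 0
    rw [ha, neg_zero]

/-- Homogeneous elements are evaluations of polynomials with homogeneous coefficients. -/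
lemma homog_poly {G : Type*} [AddCommGroup G] [DecidableEq G]
    {B : Type*} [CommRing B] (𝒜 : G → AddSubgroup B) [GradedRing 𝒜]
    (R : Subring B)
    (hRgraded : ∀ x ∈ R, ∀ i : G, (DirectSum.decompose 𝒜 x i : B) ∈ R)
    (t : B) (d : G) (ht : t ∈ 𝒜 d) (i : G) (q : Polynomial R) :
    ∃ p : Polynomial R,
      p.eval₂ R.subtype t = (DirectSum.decompose 𝒜 (q.eval₂ R.subtype t) i : B) ∧
      ∀ j : ℕ, (p.coeff j : B) ∈ 𝒜 (i - j • d) := by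
  induction q using Polynomial.induction_on' with
  | add a b ha hb =>
    obtain ⟨p, hp, hp'⟩ := ha
    obtain ⟨p2, hq, hq'⟩ := hb
    refine ⟨p + p2, ?_, ?_⟩
    · simp [Polynomial.eval₂_add, hp, hq, DirectSum.decompose_add]
    · intro j
      simpa using (𝒜 _).add_mem (hp' j) (hq' j)
  | monomial n c =>
    refine ⟨Polynomial.monomial n ⟨_, hRgraded c c.2 (i - n • d)⟩, ?_, ?_⟩
    · have := DirectSum.coe_decompose_mul_add_of_right_mem 𝒜 (a := (c : B)) (i := i - n • d)
        (SetLike.pow_mem_graded n ht)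
      rw [sub_add_cancel] at this
      rw [Polynomial.eval₂_monomial, Polynomial.eval₂_monomial]
      exact this.symm
    · intro j
      rw [Polynomial.coeff_monomial]
      split_ifs with h
      · subst h
        exact SetLike.coe_mem _
      · simp

/-- The exponents `m` such that `m d` is congruent modulo `H` to a degree of `R`. -/
def expSet {G : Type*} [AddCommGroup G] {B : Type*} [CommRing B] (𝒜 : G → AddSubgroup B)
    (R : Subring B) (d : G) (H : AddSubgroup G) (m : ℕ) : Prop :=
  ∃ (e : G) (r : B), r ∈ R ∧ r ≠ 0 ∧ r ∈ 𝒜 e ∧ e - m • d ∈ H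

lemma neg_degree {G : Type*} [AddCommGroup G] [DecidableEq G]
    {B : Type*} [CommRing B] [IsDomain B] (𝒜 : G → AddSubgroup B) [GradedRing 𝒜]
    (R : Subring B) (H : AddSubgroup G) (hH : Tmem 𝒜 H)
    (e : G) (r : B) (hr : r ∈ R) (hr0 : r ≠ 0) (hre : r ∈ 𝒜 e) :
    ∃ (f : G) (s : B), s ∈ R ∧ s ≠ 0 ∧ s ∈ 𝒜 f ∧ f + e ∈ H := by
  have he : e ∈ Gsub 𝒜 := by
    refine AddSubgroup.subset_closure ?_
    intro h
    rw [h] at hre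
    exact hr0 (by simpa using hre)
  obtain ⟨N, hN, hNe⟩ := hH e he
  obtain ⟨k, rfl⟩ : ∃ k, N = k + 1 := ⟨N - 1, by omega⟩
  refine ⟨k • e, r ^ k, R.pow_mem hr k, pow_ne_zero k hr0, SetLike.pow_mem_graded k hre, ?_⟩
  rwa [add_smul, one_smul] at hNe

lemma expSet_dvd {G : Type*} [AddCommGroup G] [DecidableEq G]
    {B : Type*} [CommRing B] [IsDomain B] (𝒜 : G → AddSubgroup B) [GradedRing 𝒜]
    (R : Subring B) (d : G) (H : AddSubgroup G) (hH : Tmem 𝒜 H) (m : ℕ) (hm : 0 < m)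
    (hmS : expSet 𝒜 R d H m) (hmin : ∀ k, 0 < k → expSet 𝒜 R d H k → m ≤ k)
    (n : ℕ) (hn : expSet 𝒜 R d H n) : m ∣ n := by
  induction n using Nat.strong_induction_on with
  | _ n ih =>
    rcases Nat.eq_zero_or_pos n with rfl | hpos
    · simp
    have hle := hmin n hpos hn
    obtain ⟨k, rfl⟩ := Nat.exists_eq_add_of_le hle
    have hk : expSet 𝒜 R d H k := by
      obtain ⟨e, r, hr, hr0, hre, heH⟩ := hmS
      obtain ⟨e', r', hr', hr0', hre', heH'⟩ := hn
      obtain ⟨f, s, hs, hs0, hsf, hfe⟩ := neg_degree 𝒜 R H hH e r hr hr0 hre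
      refine ⟨e' + f, r' * s, R.mul_mem hr' hs, mul_ne_zero hr0' hs0,
        SetLike.GradedMul.mul_mem hre' hsf, ?_⟩
      have : e' + f - k • d = (e' - (m + k) • d) - (e - m • d) + (f + e) := by
        rw [add_smul]; abel
      rw [this]
      exact H.add_mem (H.sub_mem heH' heH) hfe
    exact (Nat.dvd_add_right (dvd_refl m)).2 (ih k (by omega) hk)

/-- Let B be an integral domain of characteristic 0 graded by an abelian group G, and
suppose B = R[t] is a polynomial ring in the homogeneous variable t over a graded
subring R of B.  Then for every H ∈ 𝕋(B), R^{(H)} (= R ∩ B^{(H)}, realized as the comap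
of R along the inclusion B^{(H)} → B) belongs to KHLND(B^{(H)}): there is a nonzero
homogeneous locally nilpotent derivation of B^{(H)} whose kernel is R^{(H)}. -/
theorem polynomial_ring_KHLND
    {G : Type*} [AddCommGroup G] [DecidableEq G]
    {B : Type*} [CommRing B] [IsDomain B] [CharZero B]
    (𝒜 : G → AddSubgroup B) [GradedRing 𝒜]
    (R : Subring B)
    (hRgraded : ∀ x ∈ R, ∀ i : G, (DirectSum.decompose 𝒜 x i : B) ∈ R)
    (t : B) (d : G) (ht : t ∈ 𝒜 d)
    (hgen : ∀ b : B, b ∈ Subring.closure ((R : Set B) ∪ {t}))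
    (htrans : ∀ (n : ℕ) (c : ℕ → B), (∀ i, c i ∈ R) →
      (∑ i ∈ Finset.range n, c i * t ^ i) = 0 → ∀ i < n, c i = 0)
    (H : AddSubgroup G) (hH : Tmem 𝒜 H) :
    ∃ D : Derivation ℤ (verSub 𝒜 H) (verSub 𝒜 H),
      IsLND D ∧ IsHomogDerOn 𝒜 (verSub 𝒜 H) D ∧ D ≠ 0 ∧
      kerDer D = R.comap (verSub 𝒜 H).subtype := by
  classical
  -- surjectivity and injectivity of evaluation at `t`
  have hsurj : ∀ b : B, ∃ q : Polynomial R, q.eval₂ R.subtype t = b := by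
    intro b
    have : Subring.closure ((R : Set B) ∪ {t}) ≤ (Polynomial.eval₂RingHom R.subtype t).range := by
      rw [Subring.closure_le]
      rintro x (hx | hx)
      · exact ⟨Polynomial.C ⟨x, hx⟩, by simp⟩
      · exact ⟨Polynomial.X, by simpa using hx.symm⟩
    exact this (hgen b)
  have hinj : ∀ q : Polynomial R, q.eval₂ R.subtype t = 0 → q = 0 := by
    intro q hq
    rw [Polynomial.eval₂_eq_sum_range] at hq
    have := htrans _ (fun i => (q.coeff i : B)) (fun i => (q.coeff i).2) hq
    ext i
    by_cases hi : i < q.natDegree + 1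
    · simpa using this i hi
    · simp [Polynomial.coeff_eq_zero_of_natDegree_lt (show q.natDegree < i by omega)]
  have ht0 : t ≠ 0 := by
    intro h
    have := hinj Polynomial.X (by simpa using h)
    exact Polynomial.X_ne_zero this
  have hdG : d ∈ Gsub 𝒜 := by
    refine AddSubgroup.subset_closure ?_
    intro h
    rw [h] at ht
    exact ht0 (by simpa using ht)
  obtain ⟨N, hN, hNd⟩ := hH d hdG
  have hex : ∃ m, 0 < m ∧ expSet 𝒜 R d H m :=
    ⟨N, hN, 0, 1, R.one_mem, one_ne_zero, SetLike.GradedOne.one_mem, by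
      simpa using hNd⟩
  obtain ⟨m, ⟨hm, hmS⟩, hmin⟩ : ∃ m, (0 < m ∧ expSet 𝒜 R d H m) ∧
      ∀ k, 0 < k → expSet 𝒜 R d H k → m ≤ k :=
    ⟨Nat.find hex, Nat.find_spec hex, fun k hk hk' => Nat.find_min' hex ⟨hk, hk'⟩⟩
  have hdvd := expSet_dvd 𝒜 R d H hH m hm hmS hmin
  obtain ⟨e, r, hrR, hr0, hre, heH⟩ := hmS
  -- evaluation at `t ^ m`
  let ψ : Polynomial R →+* B := Polynomial.eval₂RingHom R.subtype (t ^ m)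
  have hψexp : ∀ q : Polynomial R, ψ q = (Polynomial.expand R m q).eval₂ R.subtype t := by
    intro q
    simp only [ψ, Polynomial.coe_eval₂RingHom]
    rw [Polynomial.expand_eq_sum, Polynomial.eval₂_eq_sum]
    simp [Polynomial.sum, Polynomial.eval₂_finsetSum, Polynomial.eval₂_pow]
  have hψ : Function.Injective ψ := by
    rw [injective_iff_map_eq_zero]
    intro q hq
    rw [hψexp] at hq
    exact (Polynomial.expand_eq_zero hm).1 (hinj _ hq)
  -- homogeneous elements of degree in `H`
  have hhom : ∀ i ∈ H, ∀ x ∈ 𝒜 i, ∃ q : Polynomial R, ψ q = x ∧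
      ∀ j : ℕ, (q.coeff j : B) ∈ 𝒜 (i - (j * m) • d) := by
    intro i hi x hx
    obtain ⟨q, rfl⟩ := hsurj x
    obtain ⟨p, hp, hpc⟩ := homog_poly 𝒜 R hRgraded t d ht i q
    rw [DirectSum.decompose_of_mem_same 𝒜 hx] at hp
    refine ⟨Polynomial.contract m p, ?_, ?_⟩
    · rw [hψexp, ← hp]
      congr 1
      ext j
      rw [Polynomial.coeff_expand hm]
      split_ifs with h
      · rw [Polynomial.coeff_contract hm.ne', Nat.div_mul_cancel h]
      · by_contra hne
        apply h
        apply hdvd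
        have hc0 : (p.coeff j : B) ≠ 0 := by
          intro h0
          exact hne (by simp [h0])
        obtain ⟨f, s, hs, hs0, hsf, hfe⟩ := neg_degree 𝒜 R H hH _ _ (p.coeff j).2 hc0 (hpc j)
        refine ⟨f, s, hs, hs0, hsf, ?_⟩
        have : f - j • d = (f + (i - j • d)) - i := by abel
        rw [this]
        exact H.sub_mem hfe hi
    · intro j
      rw [Polynomial.coeff_contract hm.ne']
      exact hpc _
  have hrange : verSub 𝒜 H ≤ ψ.range := by
    unfold verSub
    rw [Subring.closure_le]
    intro x hx
    simp only [Set.mem_iUnion] at hx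
    obtain ⟨i, hi, hx⟩ := hx
    obtain ⟨q, hq, -⟩ := hhom i hi x hx
    exact ⟨q, hq⟩
  have hverhom : ∀ i ∈ H, ∀ x ∈ 𝒜 i, x ∈ verSub 𝒜 H := by
    intro i hi x hx
    refine Subring.subset_closure ?_
    simp only [Set.mem_iUnion]
    exact ⟨i, hi, hx⟩
  let rr : R := ⟨r, hrR⟩
  have hrr : rr ≠ 0 := fun h => hr0 (congrArg Subtype.val h)
  -- the derivation on homogeneous elements
  have hDhom : ∀ i ∈ H, ∀ q : Polynomial R, ψ q ∈ 𝒜 i →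
      ψ (Polynomial.C rr * Polynomial.derivative q) ∈ 𝒜 (i + (e - m • d)) := by
    intro i hi q hq
    obtain ⟨q', hq', hc⟩ := hhom i hi _ hq
    obtain rfl := hψ hq'
    simp only [ψ, Polynomial.coe_eval₂RingHom]
    rw [Polynomial.eval₂_mul, Polynomial.eval₂_C, Polynomial.eval₂_eq_sum_range, Finset.mul_sum]
    refine sum_mem fun j _ => ?_
    rw [Polynomial.coeff_derivative]
    have h1 : (q'.coeff (j + 1) : B) * (t ^ m) ^ j * r ∈
        𝒜 ((i - ((j + 1) * m) • d) + j • (m • d) + e) :=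
      SetLike.GradedMul.mul_mem (SetLike.GradedMul.mul_mem (hc (j + 1))
        (SetLike.pow_mem_graded j (SetLike.pow_mem_graded m ht))) hre
    have h2 : (i - ((j + 1) * m) • d) + j • (m • d) + e = i + (e - m • d) := by
      rw [add_mul, add_smul, one_mul, mul_smul]; abel
    rw [h2] at h1
    have h3 := (𝒜 (i + (e - m • d))).nsmul_mem h1 (j + 1)
    convert h3 using 1
    simp [rr]
    ring
  have hDver : ∀ x ∈ verSub 𝒜 H, ∀ q : Polynomial R, ψ q = x →
      ψ (Polynomial.C rr * Polynomial.derivative q) ∈ verSub 𝒜 H := by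
    intro x hx
    have hx' := hx
    unfold verSub at hx'
    induction hx' using Subring.closure_induction with
    | mem x hy =>
      simp only [Set.mem_iUnion] at hy
      obtain ⟨i, hi, hy⟩ := hy
      rintro q rfl
      exact hverhom _ (H.add_mem hi heH) _ (hDhom i hi q hy)
    | zero =>
      intro q hq
      obtain rfl : q = 0 := hψ (by simpa using hq)
      simp
    | one =>
      intro q hq
      obtain rfl : q = 1 := hψ (by simpa using hq)
      simp
    | add a b ha hb iha ihb =>
      intro q hq
      obtain ⟨p1, rfl⟩ := hrange ha
      obtain ⟨p2, rfl⟩ := hrange hb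
      obtain rfl : q = p1 + p2 := hψ (by simpa using hq)
      rw [Polynomial.derivative_add, mul_add, map_add]
      exact add_mem (iha ha _ rfl) (ihb hb _ rfl)
    | neg a ha iha =>
      intro q hq
      obtain ⟨p1, rfl⟩ := hrange ha
      obtain rfl : q = -p1 := hψ (by simpa using hq)
      have : Polynomial.C rr * Polynomial.derivative (-p1) =
          -(Polynomial.C rr * Polynomial.derivative p1) := by
        rw [Polynomial.derivative_neg]; ring
      rw [this, map_neg]
      exact neg_mem (iha ha _ rfl)
    | mul a b ha hb iha ihb =>
      intro q hq
      obtain ⟨p1, rfl⟩ := hrange ha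
      obtain ⟨p2, rfl⟩ := hrange hb
      obtain rfl : q = p1 * p2 := hψ (by simpa using hq)
      have : Polynomial.C rr * Polynomial.derivative (p1 * p2) =
          (Polynomial.C rr * Polynomial.derivative p1) * p2 +
          p1 * (Polynomial.C rr * Polynomial.derivative p2) := by
        rw [Polynomial.derivative_mul]; ring
      rw [this, map_add, map_mul ψ _ p2, map_mul ψ p1]
      exact add_mem (mul_mem (iha ha _ rfl) hb) (mul_mem ha (ihb hb _ rfl))
  have hlift : ∀ x : verSub 𝒜 H, ∃ q : Polynomial R, ψ q = x := fun x => hrange x.2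
  choose p hp using hlift
  have padd : ∀ x y, p (x + y) = p x + p y := fun x y => hψ (by simp [hp])
  have pmul : ∀ x y, p (x * y) = p x * p y := fun x y => hψ (by simp [hp])
  have pinj : ∀ x y, p x = p y → x = y := by
    intro x y h
    apply Subtype.ext
    rw [← hp, ← hp, h]
  have pzero : p 0 = 0 := hψ (by simp [hp])
  let Df : verSub 𝒜 H →+ verSub 𝒜 H :=
    AddMonoidHom.mk' (fun x => ⟨_, hDver x x.2 (p x) (hp x)⟩) (by
      intro x y
      apply Subtype.ext
      simp [padd, mul_add])
  have pDf : ∀ x, p (Df x) = Polynomial.C rr * Polynomial.derivative (p x) := by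
    intro x
    apply hψ
    rw [hp]
    rfl
  let D : Derivation ℤ (verSub 𝒜 H) (verSub 𝒜 H) :=
    Derivation.mk' Df.toIntLinearMap (by
      intro x y
      apply pinj
      simp only [AddMonoidHom.coe_toIntLinearMap, smul_eq_mul]
      rw [padd, pmul, pmul, pDf, pDf, pDf, pmul, Polynomial.derivative_mul]
      ring)
  have pD : ∀ x, p (D x) = Polynomial.C rr * Polynomial.derivative (p x) := pDf
  have hC : ∀ x, D x = 0 ↔ Polynomial.derivative (p x) = 0 := by
    intro x
    constructor
    · intro h
      have h1 := pD x
      rw [h, pzero] at h1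
      rcases mul_eq_zero.1 h1.symm with h2 | h2
      · exact absurd (Polynomial.C_eq_zero.1 h2) hrr
      · exact h2
    · intro h
      apply pinj
      rw [pD, h, mul_zero, pzero]
  refine ⟨D, ?_, ?_, ?_, ?_⟩
  · intro b
    have key : ∀ n : ℕ, ∀ x, (p x).natDegree < n → (⇑D)^[n] x = 0 := by
      intro n
      induction n with
      | zero => intro x hx; omega
      | succ n ih =>
        intro x hx
        rw [Function.iterate_succ_apply]
        by_cases h0 : (p x).natDegree = 0
        · have : D x = 0 := (hC x).2 (Polynomial.derivative_of_natDegree_zero h0)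
          rw [this]
          exact iterate_map_zero D n
        · apply ih
          rw [pD]
          have h1 := Polynomial.natDegree_C_mul_le rr (Polynomial.derivative (p x))
          have h2 := Polynomial.natDegree_derivative_lt h0
          omega
    exact ⟨_, Nat.succ_pos _, key _ b (Nat.lt_succ_self _)⟩
  · refine ⟨e - m • d, ?_⟩
    intro i x hx
    by_cases hi : i ∈ H
    · exact hDhom i hi (p x) (by rw [hp]; exact hx)
    · have h0 := verSub_component 𝒜 H x x.2 i hi
      rw [DirectSum.decompose_of_mem_same 𝒜 hx] at h0
      have : x = 0 := Subtype.ext h0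
      rw [this, map_zero]
      exact zero_mem _
  · intro hD
    have hmem : t ^ (m * N) ∈ verSub 𝒜 H := by
      refine hverhom ((m * N) • d) ?_ _ (SetLike.pow_mem_graded _ ht)
      rw [mul_smul]
      exact H.nsmul_mem hNd m
    have hpx : p ⟨_, hmem⟩ = Polynomial.X ^ N := hψ (by rw [hp]; simp [ψ, pow_mul])
    have := (hC ⟨_, hmem⟩).1 (by rw [hD]; rfl)
    rw [hpx] at this
    have h2 := Polynomial.derivative_eq_zero.1 this
    rw [Polynomial.natDegree_X_pow] at h2
    omega
  · ext x
    change D x = 0 ↔ (x : B) ∈ R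
    rw [hC]
    constructor
    · intro h
      have h2 := Polynomial.eq_C_of_natDegree_eq_zero
        (Polynomial.derivative_eq_zero.1 h)
      rw [← hp x, h2]
      simp [ψ]
    · intro h
      have : p x = Polynomial.C ⟨x, h⟩ := hψ (by rw [hp]; simp [ψ])
      rw [this, Polynomial.derivative_C]
end
end

section
/- Let B be a noetherian normal integral domain containing ℚ, graded by a finite abelian group G. If B is saturated in codimension 1, then every derivation δ : B_0 → B_0 extends uniquely to a derivation D : B → B. -/
noncomputable section

/-- In a noetherian normal domain, an element of the fraction field which can be cleared of
denominators outside every height one prime lies in the ring. -/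
theorem mem_of_heightOne {B : Type*} [CommRing B] [IsDomain B] [IsNoetherianRing B]
    [IsIntegrallyClosed B]
    {K : Type*} [Field K] [Algebra B K] [IsFractionRing B K] (y : K)
    (hy : ∀ p : Ideal B, heightOne p → ∃ s : B, s ∉ p ∧ ∃ z : B,
      algebraMap B K z = algebraMap B K s * y) :
    ∃ b : B, algebraMap B K b = y := by
  by_contra hcon
  let N : Submodule B K := LinearMap.range (Algebra.linearMap B K)
  have hN : ∀ w : K, w ∈ N ↔ ∃ b : B, algebraMap B K b = w := by
    intro w
    simp [N]
  have hmk : ∀ (b : B) (w : K),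
      b ∈ (⊥ : Submodule B (K ⧸ N)).colon {N.mkQ w} ↔
        ∃ z : B, algebraMap B K z = algebraMap B K b * w := by
    intro b w
    rw [Submodule.mem_colon_singleton, Submodule.mem_bot, ← map_smul, Submodule.mkQ_apply,
      Submodule.Quotient.mk_eq_zero, hN, Algebra.smul_def]
  have hne : N.mkQ y ≠ 0 := by
    rw [Submodule.mkQ_apply, Ne, Submodule.Quotient.mk_eq_zero, hN]
    exact hcon
  obtain ⟨p, hp, hle⟩ := exists_le_isAssociatedPrime_of_isNoetherianRing B (N.mkQ y) hne
  rw [isAssociatedPrime_iff] at hp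
  obtain ⟨hpp, x, hx⟩ := hp
  obtain ⟨w, rfl⟩ := N.mkQ_surjective x
  have hpw : ∀ b : B, b ∈ p ↔
      ∃ z : B, algebraMap B K z = algebraMap B K b * w := by
    intro b
    rw [hx]
    exact hmk b w
  have hinj : Function.Injective (algebraMap B K) :=
    IsFractionRing.injective B K
  -- p is nonzero
  have hp0 : ∃ v : B, v ∈ p ∧ v ≠ 0 := by
    obtain ⟨a, v, hv, rfl⟩ := IsFractionRing.div_surjective B w
    refine ⟨v, (hpw v).2 ⟨a, ?_⟩, nonZeroDivisors.ne_zero hv⟩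
    have : algebraMap B K v ≠ 0 := by
      simpa using nonZeroDivisors.ne_zero hv
    field_simp
  have hex : ∃ x0 ∈ p, ∃ z, z ∉ p ∧
      algebraMap B K z = algebraMap B K x0 * w := by
    by_contra hno
    push Not at hno
    have hint : IsIntegral B w := by
      refine isIntegral_of_smul_mem_submodule
        (Submodule.map (Algebra.linearMap B K) p) ?_ ?_ w ?_
      · obtain ⟨v, hv, hv0⟩ := hp0
        rw [Submodule.ne_bot_iff]
        exact ⟨_, ⟨v, hv, rfl⟩, by simpa using hv0⟩
      · exact Submodule.FG.map _ (IsNoetherian.noetherian _)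
      · rintro _ ⟨b, hb, rfl⟩
        obtain ⟨z, hz⟩ := (hpw b).1 hb
        refine ⟨z, ?_, ?_⟩
        · by_contra hzp
          exact hno b hb z hzp hz
        · simp only [Algebra.linearMap_apply, smul_eq_mul]
          rw [hz, mul_comm]
    obtain ⟨c, hc⟩ := IsIntegrallyClosed.algebraMap_eq_of_integral hint
    apply hpp.ne_top
    rw [Ideal.eq_top_iff_one, hpw]
    exact ⟨c, by simpa using hc⟩
  obtain ⟨x0, hx0, z, hz, hzx⟩ := hex
  have hmin : p ∈ (Ideal.span {x0}).minimalPrimes := by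
    refine ⟨⟨hpp, by simpa [Ideal.span_le] using hx0⟩, ?_⟩
    rintro q ⟨hq, hxq⟩ hqp u hu
    obtain ⟨t, ht⟩ := (hpw u).1 hu
    have hx0q : x0 ∈ q := hxq (Ideal.mem_span_singleton_self x0)
    have : z * u = x0 * t := by
      apply hinj
      rw [map_mul, map_mul, hzx, ht]
      ring
    have hzu : z * u ∈ q := by
      rw [this]
      exact q.mul_mem_right _ hx0q
    exact (hq.mem_or_mem hzu).resolve_left fun h => hz (hqp h)
  have hht := Ideal.height_le_one_of_isPrincipal_of_mem_minimalPrimes _ p hmin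
  have hone : heightOne p := by
    refine ⟨hpp, ⟨⊥, Ideal.isPrime_bot, ?_⟩, ?_⟩
    · rw [bot_lt_iff_ne_bot, Submodule.ne_bot_iff]
      obtain ⟨v, hv, hv0⟩ := hp0
      exact ⟨v, hv, hv0⟩
    · intro q r hq hr hqr hrp
      have h1 := Ideal.height_add_one_le_of_lt_of_isPrime hqr
      have h2 := Ideal.height_add_one_le_of_lt_of_isPrime hrp
      have h3 : (1 : ℕ∞) ≤ r.height := le_trans (by simp) h1
      have h4 : (1 : ℕ∞) + 1 ≤ 1 := le_trans (by gcongr) (h2.trans hht)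
      exact absurd h4 (by decide)
  obtain ⟨s, hs, hz'⟩ := hy p hone
  exact hs (hle ((hmk s y).2 hz'))

/-- A derivation of `R` extends to the fraction field of an integral extension. -/
theorem extend_fraction {R B K : Type*} [CommRing R] [CommRing B] [IsDomain R] [IsDomain B]
    [CharZero R] [Algebra R B] [FaithfulSMul R B] [Algebra.IsIntegral R B]
    [Field K] [Algebra B K] [IsFractionRing B K] [Algebra R K] [IsScalarTower R B K]
    (δ : Derivation ℤ R R) :
    ∃ D : Derivation ℤ K K,
      ∀ x : R, D (algebraMap R K x) = algebraMap R K (δ x) := by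
  have : FaithfulSMul R K := by
    rw [faithfulSMul_iff_algebraMap_injective, IsScalarTower.algebraMap_eq R B K]
    exact (IsFractionRing.injective B K).comp (FaithfulSMul.algebraMap_injective R B)
  letI : Algebra (FractionRing R) K := FractionRing.liftAlgebra R K
  have : Algebra.IsAlgebraic R K :=
    (IsFractionRing.isAlgebraic_iff' R B K).1 inferInstance
  have : Algebra.IsAlgebraic (FractionRing R) K :=
    (IsFractionRing.comap_isAlgebraic_iff (A := R)).1 this
  have : CharZero (FractionRing R) := inferInstance
  have : Algebra.FormallyEtale (FractionRing R) K :=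
    Algebra.FormallyEtale.of_isSeparable _ _
  have : Algebra.FormallyEtale R (FractionRing R) :=
    Algebra.FormallyEtale.of_isLocalization (nonZeroDivisors R)
  have : Algebra.FormallyEtale R K :=
    Algebra.FormallyEtale.comp R (FractionRing R) K
  let d : Derivation ℤ R K :=
    (Algebra.linearMap R K).compDer δ
  let f : TensorProduct R K (KaehlerDifferential ℤ R)
      →ₗ[K] K :=
    LinearMap.liftBaseChange K d.liftKaehlerDifferential
  let e := KaehlerDifferential.tensorKaehlerEquivOfFormallyEtale ℤ R K
  let L : K →+ K :=
    { toFun := fun x => f (e.symm (KaehlerDifferential.D ℤ K x))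
      map_zero' := by simp
      map_add' := fun x y => by simp }
  refine ⟨Derivation.mk' L.toIntLinearMap ?_, ?_⟩
  · intro a b
    change f (e.symm (KaehlerDifferential.D ℤ K (a * b))) =
      a • f (e.symm (KaehlerDifferential.D ℤ K b)) +
      b • f (e.symm (KaehlerDifferential.D ℤ K a))
    simp only [Derivation.leibniz, map_add, map_smul]
  intro x
  have h := KaehlerDifferential.tensorKaehlerEquivOfFormallyEtale_symm_D_algebraMap
    ℤ R K x
  change f (e.symm _) = _
  rw [show e.symm _ = _ from h]
  simp [f, d]

theorem mem_verSub_of_zero {G : Type*} [AddCommGroup G] {B : Type*} [CommRing B]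
    (𝒜 : G → AddSubgroup B) {x : B} (hx : x ∈ 𝒜 0) : x ∈ verSub 𝒜 ⊥ := by
  apply Subring.subset_closure
  simp only [Set.mem_iUnion]
  exact ⟨0, by simp, hx⟩

theorem pow_mem_verSub {G : Type*} [AddCommGroup G] [DecidableEq G] [Finite G]
    {B : Type*} [CommRing B]
    (𝒜 : G → AddSubgroup B) [GradedRing 𝒜] {i : G} {x : B} (hx : x ∈ 𝒜 i) :
    x ^ Nat.card G ∈ verSub 𝒜 ⊥ := by
  apply mem_verSub_of_zero
  have := SetLike.pow_mem_graded (Nat.card G) hx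
  rwa [card_nsmul_eq_zero'] at this

theorem exists_not_mem_prime {G : Type*} [AddCommGroup G] [DecidableEq G] [Finite G]
    {B : Type*} [CommRing B]
    (𝒜 : G → AddSubgroup B) [GradedRing 𝒜] (p : Ideal B) (hp : p.IsPrime) {i : G}
    (hi : i ∈ Mbar 𝒜 p) : ∃ s ∈ 𝒜 i, s ∉ p := by
  have key : ∀ j : G, (∃ s ∈ 𝒜 j, s ∉ p) → ∃ s ∈ 𝒜 (-j), s ∉ p := by
    rintro j ⟨s, hs, hsp⟩
    refine ⟨s ^ (Nat.card G - 1), ?_, fun h => hsp (hp.mem_of_pow_mem _ h)⟩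
    have := SetLike.pow_mem_graded (Nat.card G - 1) hs
    have h2 : (Nat.card G - 1) • j = -j := by
      rw [eq_neg_iff_add_eq_zero, ← succ_nsmul, Nat.sub_add_cancel Nat.card_pos,
        card_nsmul_eq_zero']
    rwa [h2] at this
  induction hi using AddSubgroup.closure_induction with
  | mem x hx =>
    rw [Set.mem_setOf_eq, Set.not_subset] at hx
    exact hx
  | zero => exact ⟨1, SetLike.one_mem_graded 𝒜, fun h => hp.ne_top ((Ideal.eq_top_iff_one p).2 h)⟩
  | add x y _ _ hx hy =>
    obtain ⟨s, hs, hsp⟩ := hx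
    obtain ⟨t, ht, htp⟩ := hy
    exact ⟨s * t, SetLike.mul_mem_graded hs ht, fun h => (hp.mem_or_mem h).elim hsp htp⟩
  | neg x _ hx => exact key x hx

theorem extend_from_degree_zero_aux
    {G : Type*} [AddCommGroup G] [DecidableEq G] [Finite G]
    {B : Type*} [CommRing B] [IsDomain B] [IsNoetherianRing B] [IsIntegrallyClosed B]
    [Algebra ℚ B] (K : Type*) [Field K] [Algebra B K] [IsFractionRing B K]
    (𝒜 : G → AddSubgroup B) [GradedRing 𝒜]
    (hsat : Gbar 𝒜 = Gsub 𝒜) :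
    ∀ δ : Derivation ℤ (verSub 𝒜 ⊥) (verSub 𝒜 ⊥),
      ∃! D : Derivation ℤ B B, ∀ x : (verSub 𝒜 ⊥), D (x : B) = ((δ x : (verSub 𝒜 ⊥)) : B) := by
  intro δ
  have hchar : CharZero B := algebraRat.charZero B
  have hn0 : Nat.card G ≠ 0 := Nat.card_pos.ne'
  have hint : Algebra.IsIntegral (verSub 𝒜 ⊥) B := by
    refine ⟨fun b => ?_⟩
    induction b using DirectSum.Decomposition.inductionOn 𝒜 with
    | zero => exact isIntegral_zero
    | homogeneous m =>
      refine IsIntegral.of_pow (n := Nat.card G) Nat.card_pos ?_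
      exact isIntegral_algebraMap (R := verSub 𝒜 ⊥) (x := ⟨_, pow_mem_verSub 𝒜 m.2⟩)
    | add m m' h h' => exact h.add h'
  have hcharR : CharZero (verSub 𝒜 ⊥) := inferInstance
  have hfaith : FaithfulSMul (verSub 𝒜 ⊥) B := by
    rw [faithfulSMul_iff_algebraMap_injective]
    exact Subtype.val_injective
  obtain ⟨E, hE⟩ := extend_fraction (B := B) (K := K) δ
  have hE' : ∀ (x : B) (hx : x ∈ verSub 𝒜 ⊥), E (algebraMap B K x) =
      algebraMap B K (δ ⟨x, hx⟩ : verSub 𝒜 ⊥) := fun x hx => hE ⟨x, hx⟩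
  have hinj : Function.Injective (algebraMap B K) :=
    IsFractionRing.injective B K
  -- `E` maps `B` to `B`
  have hmem : ∀ b : B, ∃ c : B,
      algebraMap B K c = E (algebraMap B K b) := by
    intro b
    induction b using DirectSum.Decomposition.inductionOn 𝒜 with
    | zero => exact ⟨0, by simp⟩
    | add m m' h h' =>
      obtain ⟨c, hc⟩ := h
      obtain ⟨c', hc'⟩ := h'
      exact ⟨c + c', by simp [hc, hc']⟩
    | @homogeneous i m =>
      obtain ⟨b, hb⟩ := m
      by_cases hb0 : b = 0
      · exact ⟨0, by simp [hb0]⟩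
      apply mem_of_heightOne
      intro p hp
      have hiG : i ∈ Gsub 𝒜 := by
        apply AddSubgroup.subset_closure
        intro h
        rw [h] at hb
        exact hb0 (by simpa using hb)
      have hiM : i ∈ Mbar 𝒜 p := by
        rw [← hsat, Gbar, if_pos ⟨p, hp⟩, AddSubgroup.mem_iInf] at hiG
        exact hiG ⟨p, hp⟩
      obtain ⟨s, hs, hsp⟩ := exists_not_mem_prime 𝒜 p hp.1 ((Mbar 𝒜 p).neg_mem hiM)
      have hbs : b * s ∈ verSub 𝒜 ⊥ := by
        apply mem_verSub_of_zero
        have := SetLike.mul_mem_graded hb hs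
        rwa [add_neg_cancel] at this
      have h1 := hE' _ hbs
      have h2 := hE' _ (pow_mem_verSub 𝒜 hs)
      generalize ((δ ⟨b * s, hbs⟩ : verSub 𝒜 ⊥) : B) = u at h1
      generalize ((δ ⟨s ^ Nat.card G, pow_mem_verSub 𝒜 hs⟩ : verSub 𝒜 ⊥) : B) = v at h2
      obtain ⟨n, hn⟩ := Nat.exists_eq_succ_of_ne_zero hn0
      rw [hn] at h2
      rw [map_mul, Derivation.leibniz] at h1
      rw [map_pow, Derivation.leibniz_pow] at h2
      simp only [smul_eq_mul, nsmul_eq_mul, Nat.succ_eq_add_one, Nat.add_sub_cancel] at h1 h2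
      refine ⟨((n + 1 : ℕ) : B) * s ^ (n + 1), ?_,
        ((n + 1 : ℕ) : B) * s ^ n * u - b * v, ?_⟩
      · intro h
        rcases hp.1.mem_or_mem h with h | h
        · apply hp.1.ne_top
          refine Ideal.eq_top_of_isUnit_mem _ h ?_
          have hu : IsUnit (((n + 1 : ℕ) : ℚ)) := by
            rw [isUnit_iff_ne_zero]
            positivity
          have := hu.map (algebraMap ℚ B)
          rwa [map_natCast] at this
        · exact hsp (hp.1.mem_of_pow_mem _ h)
      · simp only [map_sub, map_mul, map_pow, map_natCast, ← h1, ← h2]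
        ring
  choose F hF using hmem
  let L : B →+ B :=
    { toFun := F
      map_zero' := hinj (by simp [hF])
      map_add' := fun x y => hinj (by simp [hF]) }
  let D : Derivation ℤ B B := Derivation.mk' L.toIntLinearMap (by
    intro a b
    apply hinj
    change algebraMap B K (F (a * b)) =
      algebraMap B K (a * F b + b * F a)
    simp [hF])
  refine ⟨D, ?_, ?_⟩
  · intro x
    apply hinj
    change algebraMap B K (F x) = _
    rw [hF, hE' x.1 x.2]
  · intro D' hD'
    have hD : ∀ x : (verSub 𝒜 ⊥), D (x : B) = ((δ x : (verSub 𝒜 ⊥)) : B) := by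
      intro x
      apply hinj
      change algebraMap B K (F x) = _
      rw [hF, hE' x.1 x.2]
    ext b
    induction b using DirectSum.Decomposition.inductionOn 𝒜 with
    | zero => simp
    | add m m' h h' => rw [map_add, map_add, h, h']
    | @homogeneous i m =>
      obtain ⟨b, hb⟩ := m
      by_cases hb0 : b = 0
      · simp [hb0]
      have h1 := hD' ⟨_, pow_mem_verSub 𝒜 hb⟩
      rw [← hD ⟨_, pow_mem_verSub 𝒜 hb⟩] at h1
      simp only [Derivation.leibniz_pow, smul_eq_mul, nsmul_eq_mul] at h1
      have hc : (Nat.card G : B) ≠ 0 := by exact_mod_cast hn0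
      exact mul_left_cancel₀ (pow_ne_zero _ hb0) (mul_left_cancel₀ hc h1)

/-- Let B be a noetherian normal ℚ-domain graded by a finite abelian group G.
If B is saturated in codimension 1 (𝔾̄(B) = 𝔾(B)), then every derivation
δ : B₀ → B₀ of the degree-0 subring B₀ = B^{(⊥)} extends uniquely to a derivation
D : B → B. -/
theorem extend_from_degree_zero
    {G : Type*} [AddCommGroup G] [DecidableEq G] [Finite G]
    {B : Type*} [CommRing B] [IsDomain B] [IsNoetherianRing B] [IsIntegrallyClosed B]
    [Algebra ℚ B]
    (𝒜 : G → AddSubgroup B) [GradedRing 𝒜]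
    (hsat : Gbar 𝒜 = Gsub 𝒜) :
    ∀ δ : Derivation ℤ (verSub 𝒜 ⊥) (verSub 𝒜 ⊥),
      ∃! D : Derivation ℤ B B, ∀ x : (verSub 𝒜 ⊥), D (x : B) = ((δ x : (verSub 𝒜 ⊥)) : B) := by
  exact extend_from_degree_zero_aux (FractionRing B) 𝒜 hsat
end
end
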